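/- arXiv:2204.12465 — 2 statements merged into one kernel-verified Lean document; each statement's English description precedes it below -/
import Mathlib

section
/- Let α > 0. If G is a graph with n vertices and average degree at least α·n, then G contains a copy of TK_r^(1), where r := α·n^{1/2}/2. -/
open scoped BigOperators

/-- The average degree of a graph `G`: `(1/|G|) * sum of degrees`. -/
noncomputable def avgDeg {V : Type*} (G : SimpleGraph V) : Real :=
  (finsum fun v : V => ((G.neighborSet v).ncard : Real)) / (Nat.card V : Real)

/-- `S` is the vertex set of a copy of `TK_t^(l)` in `G`: a balanced subdivision of the
complete graph `K_t` in which each edge is replaced by a path with `l` internal vertices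
(i.e. of length `l + 1`); the paths are pairwise internally vertex disjoint. -/
def IsTK {V : Type*} (G : SimpleGraph V) (t l : Nat) (S : Set V) : Prop :=
  ∃ b : Fin t → V, Function.Injective b ∧
    ∃ P : ∀ i j : Fin t, i < j → G.Walk (b i) (b j),
      (∀ i j (h : i < j), (P i j h).IsPath) ∧
      (∀ i j (h : i < j), (P i j h).length = l + 1) ∧
      (∀ i j (h : i < j), ∀ i' j' (h' : i' < j'), (i, j) ≠ (i', j') →
        ∀ v : V, v ∈ (P i j h).support → v ∈ (P i' j' h').support →
          (v = b i ∨ v = b j) ∧ (v = b i' ∨ v = b j')) ∧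
      S = {v : V | ∃ (i j : Fin t) (h : i < j), v ∈ (P i j h).support}

/-- `G` contains a copy of `TK_t^(l)`. -/
def HasTK {V : Type*} (G : SimpleGraph V) (t l : Nat) : Prop :=
  ∃ S : Set V, IsTK G t l S

open Finset in
lemma tk_exists_sub {V : Type*} [DecidableEq V] (w : V → V → ℝ) (hs : ∀ x y, w x y = w y x)
    (h0 : ∀ x, w x x = 0) (t : ℕ) (κ : ℝ) :
    ∀ k : ℕ, ∀ N : Finset V, N.card = t + k →
      (∑ x ∈ N, ∑ y ∈ N, w x y) ≤ κ * ((N.card : ℝ) * ((N.card : ℝ) - 1)) →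
      ∃ T ⊆ N, T.card = t ∧ (∑ x ∈ T, ∑ y ∈ T, w x y) ≤ κ * ((t : ℝ) * ((t : ℝ) - 1)) := by
  intro k
  induction k with
  | zero =>
    intro N hN h
    refine ⟨N, subset_rfl, by simpa using hN, ?_⟩
    have : N.card = t := by simpa using hN
    rw [this] at h
    exact h
  | succ k ih =>
    intro N hN h
    have hne : N.Nonempty := by
      rw [← Finset.card_pos]; omega
    obtain ⟨x0, hx0, hmax⟩ := Finset.exists_max_image N (fun x => ∑ y ∈ N, w x y) hne
    have hcard : (N.erase x0).card = t + k := by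
      rw [Finset.card_erase_of_mem hx0]; omega
    have hdeg : (∑ x ∈ N, ∑ y ∈ N, w x y) ≤ N.card * (∑ y ∈ N, w x0 y) := by
      have := Finset.sum_le_card_nsmul N (fun x => ∑ y ∈ N, w x y) _ hmax
      simpa using this
    have hsplit : (∑ x ∈ N, ∑ y ∈ N, w x y)
        = (∑ x ∈ N.erase x0, ∑ y ∈ N.erase x0, w x y) + 2 * (∑ y ∈ N, w x0 y) := by
      rw [← Finset.sum_erase_add N _ hx0]
      have h1 : ∀ x, ∑ y ∈ N, w x y = ∑ y ∈ N.erase x0, w x y + w x x0 := fun x =>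
        (Finset.sum_erase_add N _ hx0).symm
      have h2 : ∑ x ∈ N.erase x0, ∑ y ∈ N, w x y
          = ∑ x ∈ N.erase x0, ∑ y ∈ N.erase x0, w x y + ∑ x ∈ N.erase x0, w x0 x := by
        rw [← Finset.sum_add_distrib]
        exact Finset.sum_congr rfl (fun x _ => by rw [h1 x, hs x x0])
      rw [h2, h1 x0, h0]
      ring
    have hNr : (N.card : ℝ) = (t + k : ℕ) + 1 := by rw [hN]; push_cast; ring
    have key : (∑ x ∈ N.erase x0, ∑ y ∈ N.erase x0, w x y)
        ≤ κ * (((N.erase x0).card : ℝ) * (((N.erase x0).card : ℝ) - 1)) := by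
      rw [hcard]
      set m : ℝ := ((t + k : ℕ) : ℝ) with hm
      have hm0 : 0 ≤ m := Nat.cast_nonneg _
      rw [hNr] at h hdeg
      set W := (∑ x ∈ N, ∑ y ∈ N, w x y)
      set D := (∑ y ∈ N, w x0 y)
      by_cases hm1 : 1 ≤ m
      · have : (m + 1) * (W - 2 * D) ≤ (m + 1) * (κ * (m * (m - 1))) := by
          nlinarith [mul_le_mul_of_nonneg_right h (by linarith : 0 ≤ m - 1)]
        have := le_of_mul_le_mul_left this (by linarith)
        linarith
      · have hz : t + k = 0 := by
          by_contra hcon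
          apply hm1
          rw [hm]
          exact_mod_cast Nat.one_le_iff_ne_zero.mpr hcon
        have he : N.erase x0 = ∅ := by
          rw [← Finset.card_eq_zero, hcard, hz]
        have hmz : m = 0 := by rw [hm, hz]; simp
        rw [he, hmz]; simp
    obtain ⟨T, hT, hTc, hTw⟩ := ih _ hcard key
    exact ⟨T, hT.trans (Finset.erase_subset _ _), hTc, hTw⟩

/-- Final embedding through Hall's theorem. -/
lemma tk_embed {V : Type*} [Fintype V] [DecidableEq V] (G : SimpleGraph V) [DecidableRel G.Adj]
    (A T : Finset V) (hTA : T ⊆ A) (t : ℕ) (hTt : T.card = t)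
    (c : V → V → Finset V)
    (hc : ∀ x y u, u ∈ c x y ↔ u ∉ A ∧ G.Adj u x ∧ G.Adj u y)
    (hpos : ∀ x ∈ T, ∀ y ∈ T, (c x y).Nonempty)
    (hw : (∑ x ∈ T, ∑ y ∈ T, if x = y then (0 : ℝ) else ((c x y).card : ℝ)⁻¹) ≤ 2) :
    HasTK G t 1 := by
  classical
  let e : Fin t ≃ T := (T.equivFinOfCardEq hTt).symm
  let b : Fin t → V := fun i => (e i : V)
  have hbT : ∀ i, b i ∈ T := fun i => (e i).2
  have hb : Function.Injective b := Subtype.val_injective.comp e.injective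
  let ι := {p : Fin t × Fin t // p.1 < p.2}
  let F : ι → Finset V := fun p => c (b p.1.1) (b p.1.2)
  have hcs : ∀ x y, c x y = c y x := by
    intro x y; ext u; rw [hc, hc]; tauto
  -- the total weight
  have hsum : ∑ p : ι, ((F p).card : ℝ)⁻¹ ≤ 1 := by
    have h1 : (∑ x ∈ T, ∑ y ∈ T, if x = y then (0 : ℝ) else ((c x y).card : ℝ)⁻¹)
        = ∑ i : Fin t, ∑ j : Fin t, if i = j then (0:ℝ) else ((c (b i) (b j)).card : ℝ)⁻¹ := by
      have hT : ∀ f : V → ℝ, ∑ x ∈ T, f x = ∑ i : Fin t, f (b i) := by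
        intro f
        rw [← Finset.sum_coe_sort T]
        exact (Equiv.sum_comp e (fun x : T => f x)).symm
      rw [hT]
      refine Finset.sum_congr rfl fun i _ => ?_
      rw [hT]
      refine Finset.sum_congr rfl fun j _ => ?_
      simp only [hb.eq_iff]
    have h2 : ∑ p : ι, ((F p).card : ℝ)⁻¹
        = ∑ i : Fin t, ∑ j : Fin t, if i < j then ((c (b i) (b j)).card : ℝ)⁻¹ else 0 := by
      rw [← Fintype.sum_prod_type'
        (f := fun i j : Fin t => if i < j then ((c (b i) (b j)).card : ℝ)⁻¹ else 0)]
      rw [← Finset.sum_filter]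
      exact (Finset.sum_subtype _ (by simp)
        (fun p : Fin t × Fin t => ((c (b p.1) (b p.2)).card : ℝ)⁻¹)).symm
    have h3 : ∑ i : Fin t, ∑ j : Fin t, (if i < j then ((c (b i) (b j)).card : ℝ)⁻¹ else 0)
        = ∑ i : Fin t, ∑ j : Fin t, if j < i then ((c (b i) (b j)).card : ℝ)⁻¹ else 0 := by
      rw [Finset.sum_comm]
      refine Finset.sum_congr rfl fun i _ => Finset.sum_congr rfl fun j _ => ?_
      rw [hcs]
    have h4 : (∑ i : Fin t, ∑ j : Fin t, if i = j then (0:ℝ) else ((c (b i) (b j)).card : ℝ)⁻¹)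
        = ∑ i : Fin t, ∑ j : Fin t, (if i < j then ((c (b i) (b j)).card : ℝ)⁻¹ else 0)
         + ∑ i : Fin t, ∑ j : Fin t, (if j < i then ((c (b i) (b j)).card : ℝ)⁻¹ else 0) := by
      rw [← Finset.sum_add_distrib]
      refine Finset.sum_congr rfl fun i _ => ?_
      rw [← Finset.sum_add_distrib]
      refine Finset.sum_congr rfl fun j _ => ?_
      rcases lt_trichotomy i j with h | h | h
      · simp [h, h.ne, h.not_gt]
      · simp [h]
      · simp [h, h.ne', h.not_gt]
    rw [h2]
    rw [h1, h4, ← h3] at hw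
    linarith
  have hFpos : ∀ p : ι, 0 < (F p).card := fun p =>
    Finset.card_pos.mpr (hpos _ (hbT _) _ (hbT _))
  have hhall : ∀ s : Finset ι, s.card ≤ (s.biUnion F).card := by
    intro s
    rcases s.eq_empty_or_nonempty with rfl | hs
    · simp
    obtain ⟨p0, hp0, hmax⟩ := Finset.exists_max_image s (fun p => (F p).card) hs
    have hle : (F p0).card ≤ (s.biUnion F).card :=
      Finset.card_le_card (Finset.subset_biUnion_of_mem F hp0)
    refine le_trans ?_ hle
    have hq : (0:ℝ) < ((F p0).card : ℝ) := by exact_mod_cast hFpos p0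
    have h1 : (s.card : ℝ) * ((F p0).card : ℝ)⁻¹ ≤ ∑ p ∈ s, ((F p).card : ℝ)⁻¹ := by
      have := Finset.card_nsmul_le_sum s (fun p => ((F p).card : ℝ)⁻¹) (((F p0).card : ℝ)⁻¹)
        (fun p hp => inv_anti₀ (by exact_mod_cast hFpos p) (by exact_mod_cast hmax p hp))
      simpa using this
    have h2 : ∑ p ∈ s, ((F p).card : ℝ)⁻¹ ≤ ∑ p : ι, ((F p).card : ℝ)⁻¹ :=
      Finset.sum_le_sum_of_subset_of_nonneg (Finset.subset_univ s) (fun _ _ _ => by positivity)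
    have h3 : (s.card : ℝ) * ((F p0).card : ℝ)⁻¹ ≤ 1 := by linarith
    rw [← div_eq_mul_inv, div_le_one hq] at h3
    exact_mod_cast h3
  obtain ⟨f, hf, hfm⟩ := (Finset.all_card_le_biUnion_card_iff_exists_injective F).1 hhall
  have hfm' : ∀ p : ι, f p ∉ A ∧ G.Adj (f p) (b p.1.1) ∧ G.Adj (f p) (b p.1.2) := fun p =>
    (hc _ _ _).1 (hfm p)
  have hfb : ∀ p i, f p ≠ b i := fun p i h => (hfm' p).1 (h ▸ hTA (hbT i))
  let P : ∀ i j : Fin t, i < j → G.Walk (b i) (b j) := fun i j h =>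
    SimpleGraph.Walk.cons (hfm' ⟨(i, j), h⟩).2.1.symm
      (SimpleGraph.Walk.cons (hfm' ⟨(i, j), h⟩).2.2 SimpleGraph.Walk.nil)
  have hsupp : ∀ i j (h : i < j) v, v ∈ (P i j h).support ↔
      v = b i ∨ v = f ⟨(i, j), h⟩ ∨ v = b j := by
    intro i j h v
    simp [P]
  refine ⟨_, b, hb, P, ?_, ?_, ?_, rfl⟩
  · intro i j h
    have h1 := hfb ⟨(i, j), h⟩ i
    have h2 := hfb ⟨(i, j), h⟩ j
    have h3 : b i ≠ b j := fun hh => h.ne (hb hh)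
    simp [P, SimpleGraph.Walk.cons_isPath_iff, h1.symm, h2, h3]
  · intro i j h
    simp [P]
  · intro i j h i' j' h' hne v hv hv'
    rw [hsupp] at hv hv'
    have hff : f ⟨(i, j), h⟩ ≠ f ⟨(i', j'), h'⟩ := by
      intro hh
      have := hf hh
      exact hne (congrArg Subtype.val this)
    have a1 := hfb ⟨(i, j), h⟩
    have a2 := hfb ⟨(i', j'), h'⟩
    rcases hv with rfl | rfl | rfl
    · rcases hv' with h | h | h
      · exact ⟨Or.inl rfl, Or.inl h⟩
      · exact absurd h.symm (a2 _)
      · exact ⟨Or.inl rfl, Or.inr h⟩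
    · rcases hv' with h | h | h
      · exact absurd h (a1 _)
      · exact absurd h hff
      · exact absurd h (a1 _)
    · rcases hv' with h | h | h
      · exact ⟨Or.inr rfl, Or.inl h⟩
      · exact absurd h.symm (a2 _)
      · exact ⟨Or.inr rfl, Or.inr h⟩

/-- Given a good cut, find the subdivision. -/
lemma tk_of_cut {V : Type*} [Fintype V] [DecidableEq V] (G : SimpleGraph V) [DecidableRel G.Adj]
    (A : Finset V) (s : ℕ) (hs : 1 ≤ s)
    (hA : (s : ℝ) * (s + 1) / 2 * (A.offDiag.card : ℝ) <
      ∑ v ∈ Aᶜ, (((A.filter (G.Adj v)).offDiag.card : ℝ) - s * (s - 1))) :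
    HasTK G (s + 1) 1 := by
  classical
  let c : V → V → Finset V := fun x y => Finset.univ.filter fun u => u ∉ A ∧ G.Adj u x ∧ G.Adj u y
  have hc : ∀ x y u, u ∈ c x y ↔ u ∉ A ∧ G.Adj u x ∧ G.Adj u y := by
    intro x y u; simp [c]
  have hcs : ∀ x y, c x y = c y x := by
    intro x y; ext u; rw [hc, hc]; tauto
  let w : V → V → ℝ := fun x y => if x = y then 0 else ((c x y).card : ℝ)⁻¹
  let N : V → Finset V := fun v => A.filter (G.Adj v)
  have hw0 : ∀ x y, 0 ≤ w x y := by
    intro x y; simp only [w]; split_ifs <;> positivity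
  have hWle : ∑ v ∈ Aᶜ, ∑ x ∈ N v, ∑ y ∈ N v, w x y ≤ (A.offDiag.card : ℝ) := by
    have h1 : ∑ v ∈ Aᶜ, ∑ x ∈ N v, ∑ y ∈ N v, w x y
        = ∑ x ∈ A, ∑ y ∈ A, ∑ v ∈ Aᶜ, if G.Adj v x ∧ G.Adj v y then w x y else 0 := by
      have : ∀ v, ∑ x ∈ N v, ∑ y ∈ N v, w x y
          = ∑ x ∈ A, ∑ y ∈ A, if G.Adj v x ∧ G.Adj v y then w x y else 0 := by
        intro v
        simp only [N, Finset.sum_filter]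
        refine Finset.sum_congr rfl fun x _ => ?_
        by_cases hx : G.Adj v x <;> simp [hx]
      simp only [this]
      rw [Finset.sum_comm]
      refine Finset.sum_congr rfl fun x _ => ?_
      rw [Finset.sum_comm]
    have h2 : (A.offDiag.card : ℝ) = ∑ x ∈ A, ∑ y ∈ A, if x = y then (0:ℝ) else 1 := by
      rw [← Finset.sum_product' A A (fun x y => if x = y then (0:ℝ) else 1)]
      have h3 : ∀ p : V × V, (if p.1 = p.2 then (0:ℝ) else 1) = if p.1 ≠ p.2 then 1 else 0 := by
        intro p; by_cases h : p.1 = p.2 <;> simp [h]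
      simp only [h3]
      rw [Finset.sum_boole]
      congr 2
      ext ⟨x, y⟩
      simp
      tauto
    rw [h1, h2]
    refine Finset.sum_le_sum fun x _ => Finset.sum_le_sum fun y _ => ?_
    by_cases hxy : x = y
    · simp [w, hxy]
    · simp only [w, hxy, if_false]
      rw [← Finset.sum_filter, Finset.sum_const]
      have : (Aᶜ.filter fun v => G.Adj v x ∧ G.Adj v y) = c x y := by
        ext u; simp [c]
      rw [this, nsmul_eq_mul]
      exact mul_inv_le_one
  have hex : ∃ v ∈ Aᶜ, (s : ℝ) * (s + 1) / 2 * (∑ x ∈ N v, ∑ y ∈ N v, w x y)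
      < ((N v).offDiag.card : ℝ) - s * (s - 1) := by
    apply Finset.exists_lt_of_sum_lt
    rw [← Finset.mul_sum]
    refine lt_of_le_of_lt ?_ hA
    exact mul_le_mul_of_nonneg_left hWle (by positivity)
  obtain ⟨v, hv, hlt⟩ := hex
  have hoff : ((N v).offDiag.card : ℝ) = ((N v).card : ℝ) * ((N v).card - 1) := by
    rw [Finset.offDiag_card, Nat.cast_sub (Nat.le_mul_self _)]
    push_cast; ring
  have hWnn : 0 ≤ ∑ x ∈ N v, ∑ y ∈ N v, w x y :=
    Finset.sum_nonneg fun x _ => Finset.sum_nonneg fun y _ => hw0 x y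
  have hs1 : (1:ℝ) ≤ s := by exact_mod_cast hs
  rw [hoff] at hlt
  have hcard : s + 1 ≤ (N v).card := by
    by_contra hcon
    have hle : (N v).card ≤ s := by omega
    have hle' : ((N v).card : ℝ) ≤ s := by exact_mod_cast hle
    have h0 : (0:ℝ) ≤ (N v).card := Nat.cast_nonneg _
    have : 0 < ((N v).card : ℝ) * ((N v).card - 1) - s * (s - 1) :=
      lt_of_le_of_lt (mul_nonneg (by positivity) hWnn) hlt
    clear hlt hWnn hoff hWle hA
    nlinarith
  have hws : ∀ x y, w x y = w y x := by
    intro x y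
    by_cases hxy : x = y
    · rw [hxy]
    · simp only [w, if_neg hxy, if_neg (Ne.symm hxy), hcs x y]
  obtain ⟨T, hTN, hTc, hTw⟩ := tk_exists_sub w
    hws (by intro x; simp [w]) (s + 1)
    (2 / ((s : ℝ) * (s + 1))) ((N v).card - (s + 1)) (N v) (by omega) (by
      rw [div_mul_eq_mul_div, le_div_iff₀ (by positivity)]
      have hss : (0:ℝ) ≤ s * (s - 1) := mul_nonneg (by linarith) (by linarith)
      clear hWle hA hoff
      linarith)
  have hTA : T ⊆ A := hTN.trans (Finset.filter_subset _ _)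
  refine tk_embed G A T hTA (s + 1) hTc c hc ?_ ?_
  · intro x hx y hy
    refine ⟨v, (hc _ _ _).2 ⟨by simpa using hv, ?_, ?_⟩⟩
    · exact (Finset.mem_filter.1 (hTN hx)).2
    · exact (Finset.mem_filter.1 (hTN hy)).2
  · refine hTw.trans (le_of_eq ?_)
    push_cast
    field_simp
    ring

lemma tk_offDiag_sum {V : Type*} [DecidableEq V] [Fintype V] (A : Finset V) (p : V → Prop)
    [DecidablePred p] :
    ((A.filter p).offDiag.card : ℝ) =
      ∑ x : V, ∑ y : V, if (x ≠ y ∧ p x ∧ p y) ∧ x ∈ A ∧ y ∈ A then (1:ℝ) else 0 := by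
  rw [← Fintype.sum_prod_type'
    (f := fun x y : V => if (x ≠ y ∧ p x ∧ p y) ∧ x ∈ A ∧ y ∈ A then (1:ℝ) else 0)]
  rw [Finset.sum_boole]
  congr 2
  ext ⟨x, y⟩
  simp
  tauto

lemma tk_main {V : Type*} [Fintype V] [DecidableEq V] (G : SimpleGraph V) [DecidableRel G.Adj]
    (s : ℕ) (hs : 1 ≤ s) (n : ℕ) (hn : Fintype.card V = n) (hn3 : 3 ≤ n)
    (hQ : (s : ℝ) * (s + 1) * (n * (n - 1)) + 4 * n * (s * (s - 1)) <
      ∑ v : V, ((Finset.univ.filter (G.Adj v)).offDiag.card : ℝ)) :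
    HasTK G (s + 1) 1 := by
  classical
  suffices h : ∃ A ∈ (Finset.univ : Finset (Finset V)),
      (s : ℝ) * (s + 1) / 2 * (A.offDiag.card : ℝ) <
      ∑ v ∈ Aᶜ, (((A.filter (G.Adj v)).offDiag.card : ℝ) - s * (s - 1)) by
    obtain ⟨A, _, hA⟩ := h
    exact tk_of_cut G A s hs hA
  apply Finset.exists_lt_of_sum_lt
  obtain ⟨m, rfl⟩ : ∃ m, n = m + 3 := ⟨n - 3, by omega⟩
  -- counting
  have cnt2 : ∀ x y : V, x ≠ y →
      ∑ A : Finset V, (if x ∈ A ∧ y ∈ A then (1:ℝ) else 0) = 2 ^ (m + 1) := by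
    intro x y hxy
    rw [Finset.sum_boole]
    have : (Finset.univ.filter fun A : Finset V => x ∈ A ∧ y ∈ A)
        = Finset.Icc {x, y} Finset.univ := by
      ext A; simp [Finset.insert_subset_iff]
    rw [this, Finset.card_Icc_finset (Finset.subset_univ _), Finset.card_univ, hn,
      Finset.card_pair hxy, show m + 3 - 2 = m + 1 by omega]
    norm_num
  have cnt1 : ∀ v : V,
      ∑ A : Finset V, (if v ∉ A then (1:ℝ) else 0) = 2 ^ (m + 2) := by
    intro v
    rw [Finset.sum_boole]
    have : (Finset.univ.filter fun A : Finset V => v ∉ A)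
        = Finset.Icc ∅ {v}ᶜ := by
      ext A; simp
    rw [this, Finset.card_Icc_finset (Finset.empty_subset _), Finset.card_compl, hn]
    simp
  have cnt3 : ∀ v x y : V, x ≠ y → v ≠ x → v ≠ y →
      ∑ A : Finset V, (if v ∉ A ∧ x ∈ A ∧ y ∈ A then (1:ℝ) else 0) = 2 ^ m := by
    intro v x y hxy hvx hvy
    rw [Finset.sum_boole]
    have : (Finset.univ.filter fun A : Finset V => v ∉ A ∧ x ∈ A ∧ y ∈ A)
        = Finset.Icc {x, y} {v}ᶜ := by
      ext A; simp [Finset.insert_subset_iff]; tauto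
    rw [this, Finset.card_Icc_finset, Finset.card_compl, hn, Finset.card_pair hxy]
    · simp
    · intro a ha
      simp at ha ⊢
      rcases ha with rfl | rfl
      · exact hvx.symm
      · exact hvy.symm
  have hL : ∑ A : Finset V, (A.offDiag.card : ℝ) = 2 ^ (m + 1) * ((m + 3 : ℕ) * ((m + 3 : ℕ) - 1)) := by
    have h1 : ∀ A : Finset V, (A.offDiag.card : ℝ)
        = ∑ x : V, ∑ y : V, if x ≠ y ∧ x ∈ A ∧ y ∈ A then (1:ℝ) else 0 := by
      intro A
      have := tk_offDiag_sum A (fun _ => True)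
      simpa using this
    simp only [h1]
    rw [Finset.sum_comm]
    have h2 : ∀ x : V, ∑ A : Finset V, ∑ y : V, (if x ≠ y ∧ x ∈ A ∧ y ∈ A then (1:ℝ) else 0)
        = ∑ y : V, if x = y then 0 else 2 ^ (m + 1) := by
      intro x
      rw [Finset.sum_comm]
      refine Finset.sum_congr rfl fun y _ => ?_
      by_cases hxy : x = y
      · simp [hxy]
      · rw [if_neg hxy, ← cnt2 x y hxy]
        refine Finset.sum_congr rfl fun A _ => ?_
        simp [hxy]
    simp only [h2]
    have h3 : ∀ x : V, (∑ y : V, if x = y then (0:ℝ) else 2 ^ (m + 1))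
        = 2 ^ (m + 1) * ((m + 3 : ℕ) - 1) := by
      intro x
      have : ∀ y : V, (if x = y then (0:ℝ) else 2 ^ (m + 1))
          = 2 ^ (m + 1) - if x = y then 2 ^ (m + 1) else 0 := by
        intro y; split_ifs <;> simp
      simp only [this, Finset.sum_sub_distrib]
      simp [hn]; ring
    simp only [h3]
    simp [hn]; ring
  have hR : ∑ A : Finset V, ∑ v ∈ Aᶜ, (((A.filter (G.Adj v)).offDiag.card : ℝ) - s * (s - 1))
      = 2 ^ m * (∑ v : V, ((Finset.univ.filter (G.Adj v)).offDiag.card : ℝ))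
        - (m + 3 : ℕ) * (2 ^ (m + 2) * (s * (s - 1))) := by
    have h1 : ∀ A : Finset V,
        ∑ v ∈ Aᶜ, (((A.filter (G.Adj v)).offDiag.card : ℝ) - s * (s - 1))
        = ∑ v : V, ((if v ∉ A then ((A.filter (G.Adj v)).offDiag.card : ℝ) else 0)
          - (if v ∉ A then 1 else 0) * (s * (s - 1))) := by
      intro A
      have : Aᶜ = Finset.univ.filter (fun v => v ∉ A) := by ext; simp
      rw [this, Finset.sum_filter]
      refine Finset.sum_congr rfl fun v _ => ?_
      split_ifs <;> simp
    simp only [h1]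
    rw [Finset.sum_comm]
    simp only [Finset.sum_sub_distrib, ← Finset.sum_mul, cnt1]
    congr 1
    · rw [Finset.mul_sum]
      refine Finset.sum_congr rfl fun v _ => ?_
      rw [tk_offDiag_sum, Finset.mul_sum]
      have h2 : ∀ A : Finset V, (if v ∉ A then ((A.filter (G.Adj v)).offDiag.card : ℝ) else 0)
          = ∑ x : V, ∑ y : V, if (x ≠ y ∧ G.Adj v x ∧ G.Adj v y) ∧ (v ∉ A ∧ x ∈ A ∧ y ∈ A)
            then (1:ℝ) else 0 := by
        intro A
        rw [tk_offDiag_sum]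
        by_cases hv : v ∈ A <;> simp [hv]
      simp only [h2]
      rw [Finset.sum_comm]
      refine Finset.sum_congr rfl fun x _ => ?_
      rw [Finset.sum_comm, Finset.mul_sum]
      refine Finset.sum_congr rfl fun y _ => ?_
      by_cases hxy : x ≠ y ∧ G.Adj v x ∧ G.Adj v y
      · have := cnt3 v x y hxy.1 hxy.2.1.ne hxy.2.2.ne
        simp only [hxy, true_and, ne_eq, not_false_eq_true, Finset.mem_univ, and_self, if_true,
          mul_one]
        exact this
      · simp only [hxy, false_and, if_false, Finset.sum_const_zero, mul_zero]
    · simp [hn]; ring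
  rw [← Finset.mul_sum, hL, hR]
  have h2 : (0:ℝ) < 2 ^ m := by positivity
  have := mul_lt_mul_of_pos_left hQ h2
  rw [pow_succ, pow_succ]
  linear_combination this

theorem statement_6 {V : Type*} [Fintype V] (alpha : Real) (halpha : 0 < alpha)
    (G : SimpleGraph V) (n : Nat) (hn : Nat.card V = n)
    (hdeg : alpha * (n : Real) ≤ avgDeg G) :
    HasTK G ⌈alpha * Real.sqrt n / 2⌉₊ 1 := by
  classical
  rw [Nat.card_eq_fintype_card] at hn
  rcases ht : ⌈alpha * Real.sqrt n / 2⌉₊ with _ | s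
  · exact ⟨_, Fin.elim0, fun i => i.elim0, fun i => i.elim0, fun i => i.elim0, fun i => i.elim0,
      fun i => i.elim0, rfl⟩
  have hslt : (s : ℝ) < alpha * Real.sqrt n / 2 := by
    have : s < ⌈alpha * Real.sqrt n / 2⌉₊ := by omega
    exact Nat.lt_ceil.1 this
  have hsq0 : 0 < Real.sqrt n := by
    by_contra hcon
    have h0 : Real.sqrt n = 0 := le_antisymm (not_lt.1 hcon) (Real.sqrt_nonneg _)
    rw [h0] at hslt
    have : (0:ℝ) ≤ s := Nat.cast_nonneg _
    linarith
  have hn0 : (0:ℝ) < n := Real.sqrt_pos.1 hsq0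
  have hnN : 0 < n := by exact_mod_cast hn0
  rcases Nat.eq_zero_or_pos s with rfl | hs
  · have : Nonempty V := Fintype.card_pos_iff.1 (hn ▸ hnN)
    obtain ⟨v⟩ := this
    have hno : ∀ i j : Fin (0 + 1), ¬ i < j := by
      intro i j h; omega
    exact ⟨_, fun _ => v, fun i j _ => Subsingleton.elim (α := Fin 1) i j,
      fun i j h => absurd h (hno i j), fun i j h => absurd h (hno i j),
      fun i j h => absurd h (hno i j), fun i j h => absurd h (hno i j), rfl⟩
  set q := Real.sqrt n with hq
  have hqq : q * q = n := Real.mul_self_sqrt hn0.le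
  let N : V → Finset V := fun v => Finset.univ.filter (G.Adj v)
  have havg : avgDeg G = (∑ v : V, ((N v).card : ℝ)) / n := by
    unfold avgDeg
    rw [finsum_eq_sum_of_fintype, Nat.card_eq_fintype_card, hn]
    congr 1
    refine Finset.sum_congr rfl fun v _ => ?_
    congr 1
    rw [← Set.ncard_coe_finset]
    congr 1
    ext u; simp [N]
  set D := ∑ v : V, ((N v).card : ℝ) with hD
  have hs1 : (1:ℝ) ≤ s := by exact_mod_cast hs
  set d := D / n with hd
  have hDd : D = n * d := by rw [hd]; field_simp
  have hd1 : 2 * s * q < d := by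
    rw [havg] at hdeg
    have : 2 * s * q < alpha * n := by
      rw [← hqq]
      nlinarith
    linarith
  have hdn : d ≤ n := by
    rw [hd, div_le_iff₀ hn0]
    have : D ≤ ∑ v : V, (n : ℝ) := Finset.sum_le_sum fun v _ => by
      have := Finset.card_le_univ (N v)
      rw [hn] at this
      exact_mod_cast this
    simpa [hn] using this
  have hq2 : 2 * s < q := by
    have : 2 * s * q < q * q := by linarith
    exact lt_of_mul_lt_mul_right this hsq0.le
  have hq2' : 2 < q := by linarith
  have hn4 : (4:ℝ) < n := by nlinarith
  have hd4 : 4 < d := by nlinarith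
  have hn3 : 3 ≤ n := by
    have : 4 < n := by exact_mod_cast hn4
    omega
  refine tk_main G s hs n hn hn3 ?_
  have hCS : D ^ 2 ≤ n * ∑ v : V, ((N v).card : ℝ) ^ 2 := by
    have := sq_sum_le_card_mul_sum_sq (s := (Finset.univ : Finset V))
      (f := fun v => ((N v).card : ℝ))
    rw [Finset.card_univ, hn] at this
    exact this
  have hoff : ∑ v : V, ((Finset.univ.filter (G.Adj v)).offDiag.card : ℝ)
      = ∑ v : V, ((N v).card : ℝ) ^ 2 - D := by
    rw [hD, ← Finset.sum_sub_distrib]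
    refine Finset.sum_congr rfl fun v _ => ?_
    rw [Finset.offDiag_card, Nat.cast_sub (Nat.le_mul_self _)]
    push_cast; ring
  rw [hoff]
  have hQ : n * d ^ 2 ≤ ∑ v : V, ((N v).card : ℝ) ^ 2 := by
    rw [hDd] at hCS
    have : (n:ℝ) * (n * d ^ 2) ≤ n * ∑ v : V, ((N v).card : ℝ) ^ 2 := by linarith [hCS]
    exact le_of_mul_le_mul_left this hn0
  have hdd : 4 * (s:ℝ) ^ 2 * n < d ^ 2 := by
    rw [← hqq]
    nlinarith [mul_pos (by linarith : (0:ℝ) < s) hsq0]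
  have hfin : (s : ℝ) * (s + 1) * (n - 1) + 4 * (s * (s - 1)) < d ^ 2 - d := by
    have h1 : 3 / 4 * d ^ 2 ≤ d ^ 2 - d := by nlinarith
    have h2 : (s:ℝ) * (s + 1) * n ≤ 2 * s ^ 2 * n :=
      mul_le_mul_of_nonneg_right (by nlinarith) hn0.le
    have h3 : 4 * (s:ℝ) ^ 2 ≤ s ^ 2 * n := by nlinarith
    nlinarith
  have := mul_lt_mul_of_pos_left hfin hn0
  rw [hDd]
  nlinarith
end

section
/- For each 0 < ε₁, ε₂ < 1 the following holds for all sufficiently large K. Let G be an n-vertex bipartite (ε₁, ε₂·d)-expander with minimum degree δ(G) ≥ d, n ≥ K·d and d ≥ log^{800} n. Then G contains a copy of TK_{√d}^(ℓ) for some ℓ ∈ ℕ. -/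
open scoped BigOperators

/-- The function `eps(x, eps1, k)` from the definition of robust sublinear expanders. -/
noncomputable def epsFun (eps1 k x : Real) : Real :=
  if x < k / 5 then 0 else eps1 / (Real.log (15 * x / k)) ^ 2

/-- The external neighbourhood of a vertex set `X` in a graph `H`. -/
def extNbr {V : Type*} (H : SimpleGraph V) (X : Set V) : Set V :=
  {w : V | w ∉ X ∧ ∃ v ∈ X, H.Adj v w}

/-- `G` is an `(eps1, k)`-robust-expander. -/
def IsExpander {V : Type*} (G : SimpleGraph V) (eps1 k : Real) : Prop :=
  ∀ X : Set V, k / 2 ≤ (X.ncard : Real) → (X.ncard : Real) ≤ (Nat.card V : Real) / 2 →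
    ∀ F : SimpleGraph V, F ≤ G →
      (F.edgeSet.ncard : Real) ≤ avgDeg G * epsFun eps1 k (X.ncard) * (X.ncard : Real) →
      epsFun eps1 k (X.ncard) * (X.ncard : Real) ≤ ((extNbr (G \ F) X).ncard : Real)

/-- The minimum degree of `G` is at least `d`. -/
def minDegGe {V : Type*} (G : SimpleGraph V) (d : Real) : Prop :=
  ∀ v : V, d ≤ ((G.neighborSet v).ncard : Real)

/-- `G` is bipartite with parts `A` and its complement. -/
def IsBipartiteWith {V : Type*} (G : SimpleGraph V) (A : Set V) : Prop :=
  ∀ ⦃v w : V⦄, G.Adj v w → (v ∈ A ↔ w ∉ A)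

/-- `G` is bipartite. -/
def IsBipartite {V : Type*} (G : SimpleGraph V) : Prop :=
  ∃ A : Set V, IsBipartiteWith G A

namespace TKproof

open Classical Finset

set_option linter.unusedSectionVars false

variable {V : Type} [Fintype V]

/-- number of adjacent pairs between two vertex sets -/
noncomputable def ec (G : SimpleGraph V) (X Y : Finset V) : ℕ :=
  ∑ x ∈ X, (Y.filter (fun y => G.Adj x y)).card

/-- convenient form of expansion -/
def ExpP (G : SimpleGraph V) (d L : ℝ) : Prop :=
  ∀ X T : Finset V, d / 2 ≤ (X.card : ℝ) → (X.card : ℝ) ≤ (Fintype.card V : ℝ) / 2 →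
    (ec G X (X ∪ T)ᶜ : ℝ) ≤ d * (X.card : ℝ) / L → (X.card : ℝ) / L ≤ (T.card : ℝ)

lemma ec_mono {G : SimpleGraph V} {X X' Y Y' : Finset V} (hX : X ⊆ X') (hY : Y ⊆ Y') :
    ec G X Y ≤ ec G X' Y' := by
  unfold ec
  calc _ ≤ ∑ x ∈ X, (Y'.filter (fun y => G.Adj x y)).card :=
        Finset.sum_le_sum fun x _ => card_le_card (filter_subset_filter _ hY)
    _ ≤ _ := Finset.sum_le_sum_of_subset hX

lemma ec_symm (G : SimpleGraph V) (X Y : Finset V) :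
    ec G X Y = ∑ y ∈ Y, (X.filter (fun x => G.Adj x y)).card := by
  unfold ec
  exact Finset.sum_card_bipartiteAbove_eq_sum_card_bipartiteBelow (fun x y => G.Adj x y)

lemma ec_union_left (G : SimpleGraph V) (X X' Y : Finset V) :
    ec G (X ∪ X') Y ≤ ec G X Y + ec G X' Y := by
  unfold ec
  have := Finset.sum_union_inter (s₁ := X) (s₂ := X') (f := fun x => (Y.filter (fun y => G.Adj x y)).card)
  omega

/-- greedy covering -/
lemma cover (G : SimpleGraph V) (B T : Finset V) (D : ℝ) (hB : B.Nonempty)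
    (hT : ∀ w ∈ T, D ≤ ((B.filter (fun b => G.Adj b w)).card : ℝ)) (hD : D ≤ B.card) (m : ℕ) :
    ∃ A ⊆ B, A.card ≤ m ∧
      ((T.filter (fun w => ∀ a ∈ A, ¬ G.Adj a w)).card : ℝ) ≤ T.card * (1 - D / B.card) ^ m := by
  induction m with
  | zero => exact ⟨∅, by simp, by simp, by simp⟩
  | succ m ih =>
    obtain ⟨A, hA, hAm, hc⟩ := ih
    set T' := T.filter (fun w => ∀ a ∈ A, ¬ G.Adj a w) with hT'
    have hBpos : (0:ℝ) < B.card := by exact_mod_cast hB.card_pos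
    have hsum : D * T'.card ≤ ∑ b ∈ B, ((T'.filter (fun w => G.Adj b w)).card : ℝ) := by
      have h1 := ec_symm G B T'
      unfold ec at h1
      have h2 : (∑ b ∈ B, ((T'.filter (fun w => G.Adj b w)).card : ℝ))
          = ∑ w ∈ T', ((B.filter (fun b => G.Adj b w)).card : ℝ) := by exact_mod_cast h1
      rw [h2]
      calc D * T'.card = ∑ w ∈ T', D := by simp [mul_comm]
        _ ≤ _ := Finset.sum_le_sum fun w hw => hT w (Finset.mem_of_mem_filter w hw)
    obtain ⟨b, hb, hbb⟩ : ∃ b ∈ B, D * T'.card / B.card ≤ ((T'.filter (fun w => G.Adj b w)).card : ℝ) := by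
      apply Finset.exists_le_of_sum_le hB
      rw [Finset.sum_const, nsmul_eq_mul]
      rwa [mul_div_cancel₀ _ hBpos.ne']
    refine ⟨insert b A, Finset.insert_subset hb hA, (Finset.card_insert_le _ _).trans (by omega), ?_⟩
    have hsplit : T.filter (fun w => ∀ a ∈ insert b A, ¬ G.Adj a w) = T'.filter (fun w => ¬ G.Adj b w) := by
      ext w; simp [hT']; tauto
    rw [hsplit]
    have h3 : (T'.filter (fun w => G.Adj b w)).card + (T'.filter (fun w => ¬ G.Adj b w)).card = T'.card :=
      Finset.card_filter_add_card_filter_not _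
    have h4 : ((T'.filter (fun w => ¬ G.Adj b w)).card : ℝ) ≤ T'.card * (1 - D / B.card) := by
      have : ((T'.filter (fun w => G.Adj b w)).card : ℝ) + (T'.filter (fun w => ¬ G.Adj b w)).card = T'.card := by
        exact_mod_cast h3
      have e : (T'.card : ℝ) * (1 - D / B.card) = T'.card - D * T'.card / B.card := by ring
      rw [e]; linarith
    have h5 : 0 ≤ 1 - D / (B.card : ℝ) := by
      rw [sub_nonneg, div_le_one hBpos]; exact hD
    calc _ ≤ _ := h4
      _ ≤ (T.card * (1 - D / B.card) ^ m) * (1 - D / B.card) := by gcongr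
      _ = _ := by ring

/-- covering everything -/
lemma cover_all (G : SimpleGraph V) (B T : Finset V) (D x : ℝ) (hD : 0 < D)
    (hT : ∀ w ∈ T, D ≤ ((B.filter (fun b => G.Adj b w)).card : ℝ))
    (hx : B.card * Real.log (Fintype.card V) / D + 1 ≤ x) :
    ∃ A ⊆ B, (A.card : ℝ) ≤ x ∧ ∀ w ∈ T, ∃ a ∈ A, G.Adj a w := by
  have hlog : 0 ≤ Real.log (Fintype.card V) := Real.log_natCast_nonneg _
  have hq : 0 ≤ B.card * Real.log (Fintype.card V) / D := by positivity
  rcases T.eq_empty_or_nonempty with rfl | ⟨w0, hw0⟩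
  · exact ⟨∅, by simp, by simp; linarith, by simp⟩
  have h1 := hT w0 hw0
  have hBD : D ≤ B.card := h1.trans (by exact_mod_cast card_le_card (filter_subset _ _))
  have hBpos : (0:ℝ) < B.card := hD.trans_le hBD
  have hB : B.Nonempty := by
    rw [← Finset.card_pos]; exact_mod_cast hBpos
  set q := B.card * Real.log (Fintype.card V) / D with hqdef
  obtain ⟨A, hA, hAm, hc⟩ := cover G B T D hB hT hBD (⌊q⌋₊ + 1)
  refine ⟨A, hA, ?_, ?_⟩
  · have : (A.card : ℝ) ≤ (⌊q⌋₊ : ℝ) + 1 := by exact_mod_cast hAm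
    have := Nat.floor_le hq
    linarith
  · have hlt : (T.card : ℝ) * (1 - D / B.card) ^ (⌊q⌋₊ + 1) < 1 := by
      have hn : (0:ℝ) < Fintype.card V := by
        have : 0 < Fintype.card V := Fintype.card_pos_iff.mpr ⟨w0⟩
        exact_mod_cast this
      have hTn : (T.card : ℝ) ≤ Fintype.card V := by exact_mod_cast card_le_univ T
      have h5 : 0 ≤ 1 - D / (B.card : ℝ) := by
        rw [sub_nonneg, div_le_one hBpos]; exact hBD
      have h6 : 1 - D / (B.card : ℝ) ≤ Real.exp (-(D / B.card)) := by
        have := Real.add_one_le_exp (-(D / (B.card:ℝ))); linarith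
      have h7 : (1 - D / (B.card : ℝ)) ^ (⌊q⌋₊ + 1) ≤ Real.exp (-(D / B.card) * (⌊q⌋₊ + 1)) := by
        calc _ ≤ (Real.exp (-(D / B.card))) ^ (⌊q⌋₊ + 1) := by gcongr
          _ = _ := by rw [← Real.exp_nat_mul]; push_cast; ring_nf
      have h8 : Real.log (Fintype.card V) < (D / B.card) * (⌊q⌋₊ + 1) := by
        have := Nat.lt_floor_add_one q
        have h9 : Real.log (Fintype.card V) = (D / B.card) * q := by
          rw [hqdef]; field_simp
        rw [h9]; exact mul_lt_mul_of_pos_left this (div_pos hD hBpos)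
      calc _ ≤ (Fintype.card V : ℝ) * Real.exp (-(D / B.card) * (⌊q⌋₊ + 1)) := by gcongr
        _ = Real.exp (Real.log (Fintype.card V) - (D / B.card) * (⌊q⌋₊ + 1)) := by
            rw [sub_eq_add_neg, Real.exp_add, Real.exp_log hn]; ring_nf
        _ < 1 := by rw [Real.exp_lt_one_iff]; linarith
    have h0 : (T.filter (fun w => ∀ a ∈ A, ¬ G.Adj a w)).card = 0 := by
      have : ((T.filter (fun w => ∀ a ∈ A, ¬ G.Adj a w)).card : ℝ) < 1 := hc.trans_lt hlt
      have : (T.filter (fun w => ∀ a ∈ A, ¬ G.Adj a w)).card < 1 := by exact_mod_cast this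
      omega
    intro w hw
    by_contra hcon
    push Not at hcon
    rw [Finset.card_eq_zero] at h0
    have : w ∈ T.filter (fun w => ∀ a ∈ A, ¬ G.Adj a w) := by simp [hw]; exact hcon
    rw [h0] at this; simp at this

/-- covering a proportional part -/
lemma cover_part (G : SimpleGraph V) (B T : Finset V) (a : ℕ) (hB : B.Nonempty) (ha : a ≤ B.card)
    (hT : ∀ w ∈ T, ∃ b ∈ B, G.Adj b w) :
    ∃ A ⊆ B, A.card ≤ a ∧
      (T.card : ℝ) * a / (2 * B.card) ≤ ((T.filter (fun w => ∃ x ∈ A, G.Adj x w)).card : ℝ) := by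
  have hB1 : 1 ≤ B.card := hB.card_pos
  have hBpos : (0:ℝ) < B.card := by exact_mod_cast hB1
  obtain ⟨A, hA, hAm, hc⟩ := cover G B T 1 hB (by
    intro w hw
    obtain ⟨b, hb, hbw⟩ := hT w hw
    have : 0 < (B.filter (fun b => G.Adj b w)).card := Finset.card_pos.mpr ⟨b, by simp [hb, hbw]⟩
    exact_mod_cast this) (by exact_mod_cast hB1) a
  refine ⟨A, hA, hAm, ?_⟩
  have h3 : (T.filter (fun w => ∃ x ∈ A, G.Adj x w)).card + (T.filter (fun w => ¬ ∃ x ∈ A, G.Adj x w)).card = T.card :=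
      Finset.card_filter_add_card_filter_not _
  have h3' : ((T.filter (fun w => ∃ x ∈ A, G.Adj x w)).card : ℝ) + (T.filter (fun w => ¬ ∃ x ∈ A, G.Adj x w)).card = T.card := by
    exact_mod_cast h3
  have h4 : T.filter (fun w => ¬ ∃ x ∈ A, G.Adj x w) = T.filter (fun w => ∀ a ∈ A, ¬ G.Adj a w) := by
    ext w; simp
  rw [h4] at h3'
  set y : ℝ := a / B.card with hy
  have hy0 : 0 ≤ y := by positivity
  have hy1 : y ≤ 1 := by rw [hy, div_le_one hBpos]; exact_mod_cast ha
  have h5 : 0 ≤ 1 - 1 / (B.card : ℝ) := by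
    rw [sub_nonneg, div_le_one hBpos]; exact_mod_cast hB1
  have h7 : (1 - 1 / (B.card : ℝ)) ^ a ≤ 1 - y / 2 := by
    have h6 : 1 - 1 / (B.card : ℝ) ≤ Real.exp (-(1 / B.card)) := by
      have := Real.add_one_le_exp (-(1 / (B.card:ℝ))); linarith
    calc _ ≤ (Real.exp (-(1 / B.card))) ^ a := by gcongr
      _ = Real.exp (-y) := by rw [← Real.exp_nat_mul]; congr 1; rw [hy]; ring
      _ ≤ 1 - y / 2 := by
        rw [Real.exp_neg]
        have := Real.add_one_le_exp y
        rw [inv_le_comm₀ (Real.exp_pos _) (by linarith)]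
        refine le_trans ?_ this
        rw [inv_le_iff_one_le_mul₀ (by linarith)]
        nlinarith
  have h8 : (T.card : ℝ) * (1 - 1 / B.card) ^ a ≤ T.card * (1 - y / 2) := by gcongr
  have e : (T.card : ℝ) * a / (2 * B.card) = T.card * y / 2 := by rw [hy]; field_simp
  rw [e]; linarith

end TKproof
namespace TKproof

open Classical Finset

set_option linter.unusedSectionVars false

variable {V : Type} [Fintype V]

/-- standing assumptions -/
structure Ctx (G : SimpleGraph V) (Y : Set V) (d L r : ℝ) : Prop where
  bip : ∀ v w, G.Adj v w → (v ∈ Y ↔ w ∉ Y)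
  exp : ExpP G d L
  half : (Fintype.card V : ℝ) / 2 ≤ ((univ.filter (fun v => v ∉ Y)).card : ℝ)
  hd : d = r ^ 4
  hL : 1000 ≤ L
  hr : L ^ 20 ≤ r
  hlog : 4 * Real.log (Fintype.card V) ≤ r
  hn : d * L ^ 40 ≤ Fintype.card V
  hexp : (Fintype.card V : ℝ) ≤ d * Real.exp L

/-- choose a subset covering enough -/
lemma step_cover {G : SimpleGraph V} {B Z : Finset V} {c r L : ℝ}
    (hc : 1 ≤ c / r / 2) (hL : 1 ≤ L) (hr : 2000 * L ^ 2 ≤ r) (hlog : 4 * Real.log (Fintype.card V) ≤ r)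
    (hB2 : (B.card : ℝ) ≤ 2 * c) (hBZ : Disjoint B Z) :
    (∃ A ⊆ B, (A.card : ℝ) ≤ c / r ∧
      2 * c + 1 ≤ ((univ.filter (fun w => w ∉ Z ∧ ∃ a ∈ A, G.Adj a w)).card : ℝ)) ∨
    (((univ.filter (fun w => w ∉ Z ∧ ∃ a ∈ B, G.Adj a w)).card : ℝ) ≤ r ^ 2 / (100 * L ^ 2) * c ∧
      ∃ A ⊆ B, (A.card : ℝ) ≤ c / r ∧
        ∀ w, r ^ 2 ≤ ((B.filter (fun b => G.Adj b w)).card : ℝ) → ∃ a ∈ A, G.Adj a w) := by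
  have hL2 : 1 ≤ L ^ 2 := one_le_pow₀ hL
  have hr0 : 2000 ≤ r := by nlinarith
  have hrpos : 0 < r := by linarith
  have hcpos : 2 * r ≤ c := by
    rw [div_div, le_div_iff₀ (by positivity)] at hc; linarith
  set NB := univ.filter (fun w => w ∉ Z ∧ ∃ a ∈ B, G.Adj a w) with hNB
  by_cases hh : (NB.card : ℝ) ≤ r ^ 2 / (100 * L ^ 2) * c
  · right
    refine ⟨hh, ?_⟩
    by_cases hsm : (B.card : ℝ) ≤ c / r
    · refine ⟨B, subset_rfl, hsm, ?_⟩
      intro w hw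
      have : (0:ℝ) < (B.filter (fun b => G.Adj b w)).card := lt_of_lt_of_le (by positivity) hw
      have : 0 < (B.filter (fun b => G.Adj b w)).card := by exact_mod_cast this
      obtain ⟨a, ha⟩ := Finset.card_pos.mp this
      simp at ha
      exact ⟨a, ha⟩
    · obtain ⟨A, hA, hAc, hcov⟩ := cover_all G B
        (univ.filter (fun w => r ^ 2 ≤ ((B.filter (fun b => G.Adj b w)).card : ℝ))) (r ^ 2) (c / r)
        (by positivity) (by simp) (by
          have hlog0 : 0 ≤ Real.log (Fintype.card V) := Real.log_natCast_nonneg _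
          have h1 : B.card * Real.log (Fintype.card V) / r ^ 2 ≤ c / r / 2 := by
            rw [div_le_iff₀ (by positivity)]
            have e : c / r / 2 * r ^ 2 = (2 * c) * (r / 4) := by field_simp; ring
            rw [e]
            have : Real.log (Fintype.card V) ≤ r / 4 := by linarith
            have h2c : 0 ≤ 2 * c := by linarith
            gcongr
          linarith)
      exact ⟨A, hA, hAc, fun w hw => hcov w (by simpa using hw)⟩
  · left
    push Not at hh
    by_cases hsm : (B.card : ℝ) ≤ c / r
    · refine ⟨B, subset_rfl, hsm, ?_⟩
      rw [← hNB]
      refine le_trans ?_ hh.le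
      have : 10000 ≤ r ^ 2 / (100 * L ^ 2) := by
        rw [le_div_iff₀ (by positivity)]
        nlinarith
      nlinarith
    · push Not at hsm
      have hcr : 0 ≤ c / r := by linarith
      have hfl := Nat.floor_le hcr
      have hBn : B.Nonempty := by
        rw [← Finset.card_pos]
        have : (0:ℝ) < B.card := by linarith
        exact_mod_cast this
      have hBpos : (0:ℝ) < B.card := by exact_mod_cast hBn.card_pos
      obtain ⟨A, hA, hAc, hcov⟩ := cover_part G B NB ⌊c / r⌋₊ hBn (by
          have : ((⌊c / r⌋₊ : ℕ) : ℝ) ≤ B.card := by linarith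
          exact_mod_cast this) (by intro w hw; simp [hNB] at hw; exact hw.2)
      refine ⟨A, hA, ?_, ?_⟩
      · have : (A.card : ℝ) ≤ (⌊c / r⌋₊ : ℕ) := by exact_mod_cast hAc
        linarith
      · have hsub : NB.filter (fun w => ∃ x ∈ A, G.Adj x w) ⊆
            univ.filter (fun w => w ∉ Z ∧ ∃ a ∈ A, G.Adj a w) := by
          intro w hw; simp [hNB] at hw ⊢; exact ⟨hw.1.1, hw.2⟩
        have h1 : ((NB.filter (fun w => ∃ x ∈ A, G.Adj x w)).card : ℝ) ≤
          (univ.filter (fun w => w ∉ Z ∧ ∃ a ∈ A, G.Adj a w)).card := by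
            exact_mod_cast card_le_card hsub
        refine le_trans ?_ h1
        refine le_trans ?_ hcov
        rw [le_div_iff₀ (by positivity)]
        have hf2 : c / r / 2 ≤ (⌊c / r⌋₊ : ℝ) := by
          have := Nat.lt_floor_add_one (c / r); linarith
        have h3 : r ^ 2 / (100 * L ^ 2) * c * (c / r / 2) ≤ NB.card * (⌊c / r⌋₊ : ℝ) := by
          gcongr
        refine le_trans ?_ h3
        have h4 : r ^ 2 / (100 * L ^ 2) * c * (c / r / 2) = (r / (2000 * L ^ 2)) * (10 * c * c) := by
          field_simp; ring
        rw [h4]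
        have h5 : 1 ≤ r / (2000 * L ^ 2) := by
          rw [le_div_iff₀ (by positivity)]; linarith
        have h6 : 1 * (10 * c * c) ≤ (r / (2000 * L ^ 2)) * (10 * c * c) := by
          apply mul_le_mul_of_nonneg_right h5; nlinarith
        nlinarith

lemma Ctx.num {G : SimpleGraph V} {Y : Set V} {d L r : ℝ} (h : Ctx G Y d L r) :
    0 < L ∧ 2000 * L ^ 2 ≤ r ∧ 2000 ≤ r ∧ r * 2 ≤ d ∧ 4 * L ≤ r ^ 2 := by
  have hL := h.hL
  have hLpos : 0 < L := by linarith
  have hr20 : 2000 * L ^ 2 ≤ r := by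
    refine le_trans ?_ h.hr
    calc 2000 * L ^ 2 ≤ L ^ 18 * L ^ 2 := by
          gcongr
          calc (2000:ℝ) ≤ 1000 ^ 18 := by norm_num
            _ ≤ _ := by gcongr
      _ = L ^ 20 := by ring
  have hr2000 : 2000 ≤ r := by nlinarith
  have hrpos : 0 < r := by linarith
  have hd1 : r * 2 ≤ d := by
    rw [h.hd]
    have : (2:ℝ) ≤ r ^ 3 := by
      calc (2:ℝ) ≤ 2000 ^ 3 := by norm_num
        _ ≤ _ := by gcongr
    nlinarith
  refine ⟨hLpos, hr20, hr2000, hd1, by nlinarith⟩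


lemma step_reset {G : SimpleGraph V} {d L r c c' : ℝ} {B Bt Z : Finset V} (hd : 0 < d)
   (hc1 : 1 ≤ c') (A : Finset V) (hA : A ⊆ Bt) (hAc : (A.card : ℝ) ≤ c / r) (Q : Finset V) (hQ : Disjoint Q Z)
   (hQA : ∀ w ∈ Q, ∃ a ∈ A, G.Adj a w) (hQc : c' ≤ Q.card) :
      ∃ A P' B' : Finset V, A ⊆ Bt ∧ (A.card : ℝ) ≤ c / r ∧ Disjoint B' Z ∧
      (∀ w ∈ B', ∃ a ∈ A, G.Adj a w) ∧ P' ⊆ B ∧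
      (ec G P' (P' ∪ B' ∪ Z)ᶜ : ℝ) ≤ d * c' / (100 * L ^ 2) ∧
      c' ≤ P'.card + B'.card ∧ (B'.card : ℝ) ≤ 2 * c' := by
    have hceil : (⌈c'⌉₊ : ℝ) ≤ 2 * c' := by
      have := Nat.ceil_lt_add_one (a := c') (by linarith); linarith
    obtain ⟨Q', hQ', hQ'c⟩ := Finset.exists_subset_card_eq (s := Q) (n := ⌈c'⌉₊) (by
      exact Nat.ceil_le.mpr hQc)
    refine ⟨A, ∅, Q', hA, hAc, hQ.mono_left hQ', fun w hw => hQA w (hQ' hw), by simp, ?_, ?_, ?_⟩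
    · simp [ec]
      have : 0 ≤ c' := by linarith
      positivity
    · rw [hQ'c]; simp; exact Nat.le_ceil _
    · rw [hQ'c]; exact hceil

lemma step_low {G : SimpleGraph V} {d L r c : ℝ} {Bt Z Bs : Finset V} (hd : d = r ^ 4)
  (hNB : ((univ.filter (fun w => w ∉ Z ∧ ∃ a ∈ Bt, G.Adj a w)).card : ℝ) ≤ r ^ 2 / (100 * L ^ 2) * c)
  (hBs : Bs = univ.filter (fun w => w ∉ Z ∧ r ^ 2 ≤ ((Bt.filter (fun b => G.Adj b w)).card : ℝ))) :
   (ec G Bt (Bs ∪ Z)ᶜ : ℝ) ≤ d * c / (100 * L ^ 2) := by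
    rw [ec_symm]
    push_cast
    set NB := univ.filter (fun w => w ∉ Z ∧ ∃ a ∈ Bt, G.Adj a w) with hNBd
    calc (∑ y ∈ (Bs ∪ Z)ᶜ, ((Bt.filter (fun x => G.Adj x y)).card : ℝ))
        ≤ ∑ y ∈ (Bs ∪ Z)ᶜ, (if y ∈ NB then r ^ 2 else 0) := by
          apply Finset.sum_le_sum
          intro y hy
          simp [hBs] at hy
          by_cases hyN : y ∈ NB
          · rw [if_pos hyN]; exact (hy.1 hy.2).le
          · rw [if_neg hyN]
            simp [hNBd] at hyN
            have : Bt.filter (fun x => G.Adj x y) = ∅ := by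
              ext x; simp; intro hx; exact hyN hy.2 x hx
            rw [this]; simp
      _ ≤ ∑ y ∈ univ, (if y ∈ NB then r ^ 2 else 0) := by
          apply Finset.sum_le_sum_of_subset_of_nonneg (by simp)
          intro i _ _; positivity
      _ = NB.card * r ^ 2 := by simp
      _ ≤ (r ^ 2 / (100 * L ^ 2) * c) * r ^ 2 := by gcongr
      _ = _ := by rw [hd]; ring

lemma step_X0 {G : SimpleGraph V} {Y : Set V} {d L r : ℝ} (h : Ctx G Y d L r)
    {P B Bt Z X0 : Finset V} {c : ℝ}
    (hP : ∀ x ∈ P, ∀ y ∈ P, ¬ G.Adj x y) (hBt : Bt = B \ Z)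
    (hec : (ec G P (P ∪ B ∪ Z)ᶜ : ℝ) ≤ d * c / (100 * L ^ 2))
    (hZ : (Z.card : ℝ) ≤ c / (100 * L ^ 2))
    (hcd : 100 * L * d ≤ c) (hnc : c ≤ 1.001 * Fintype.card V)
    (hX0 : X0 = P.filter (fun b => ((Bt.filter (fun x => G.Adj b x)).card : ℝ) < r ^ 2)) :
    (X0.card : ℝ) ≤ c / (20 * L) := by
    obtain ⟨hLpos, hr20, hr2000, hd1, h4L⟩ := h.num
    have hL := h.hL
    have hdpos : 0 < d := by linarith
    have hcpos : 0 < c := lt_of_lt_of_le (by positivity) hcd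
    have hBtB : Bt ⊆ B := by rw [hBt]; exact sdiff_subset
    by_contra hcon
    push Not at hcon
    set m := ⌈c / (25 * L)⌉₊ with hm
    have hm0 : c / (25 * L) ≤ m := Nat.le_ceil _
    have hcL : 4 * d ≤ c / (25 * L) := by
      rw [le_div_iff₀ (by positivity)]; linarith
    have hm1 : (m : ℝ) ≤ c / (20 * L) := by
      have h1 := Nat.ceil_lt_add_one (a := c / (25 * L)) (by positivity)
      have h2 : c / (20 * L) = c / (25 * L) + c / (25 * L) / 4 := by field_simp; ring
      rw [h2]; linarith
    obtain ⟨X1, hX1, hX1c⟩ := Finset.exists_subset_card_eq (s := X0) (n := m) (by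
      have : (m:ℝ) ≤ X0.card := by linarith
      exact_mod_cast this)
    have hX1P : X1 ⊆ P := hX1.trans (by rw [hX0]; exact filter_subset _ _)
    have hmn : (m : ℝ) ≤ Fintype.card V / 2 := by
      refine hm1.trans ?_
      rw [div_le_iff₀ (by positivity)]
      have h0 : (0:ℝ) ≤ Fintype.card V := by positivity
      have h9 : (Fintype.card V : ℝ) / 2 * (20 * 1000) ≤ (Fintype.card V : ℝ) / 2 * (20 * L) := by gcongr
      linarith
    have key := h.exp X1 Z (by rw [hX1c]; linarith) (by rw [hX1c]; exact hmn) (by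
      rw [hX1c]
      have h1 : ec G X1 (X1 ∪ Z)ᶜ ≤ ec G X1 Bt + ec G P (P ∪ B ∪ Z)ᶜ := by
        unfold ec
        calc _ ≤ ∑ x ∈ X1, ((Bt.filter (fun y => G.Adj x y)).card +
              ((P ∪ B ∪ Z)ᶜ.filter (fun y => G.Adj x y)).card) := by
              apply Finset.sum_le_sum
              intro x hx
              rw [← Finset.card_union_of_disjoint]
              · apply card_le_card
                intro y hy
                simp only [mem_filter, mem_compl, mem_union, not_or] at hy ⊢
                by_cases hyB : y ∈ B
                · left; exact ⟨by simp [hBt, hyB, hy.1.2], hy.2⟩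
                · right
                  exact ⟨⟨⟨fun hyP => hP x (hX1P hx) y hyP hy.2, hyB⟩, hy.1.2⟩, hy.2⟩
              · rw [Finset.disjoint_left]
                intro y hy hy2
                simp only [mem_filter, mem_compl, mem_union, not_or] at hy hy2
                exact hy2.1.1.2 (hBtB hy.1)
          _ = ∑ x ∈ X1, (Bt.filter (fun y => G.Adj x y)).card +
              ∑ x ∈ X1, ((P ∪ B ∪ Z)ᶜ.filter (fun y => G.Adj x y)).card := Finset.sum_add_distrib
          _ ≤ _ := by
              gcongr
      have h2 : (ec G X1 Bt : ℝ) ≤ m * r ^ 2 := by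
        unfold ec
        push_cast
        calc _ ≤ ∑ x ∈ X1, r ^ 2 := by
              apply Finset.sum_le_sum
              intro x hx
              have := hX1 hx
              simp only [hX0, mem_filter] at this
              exact this.2.le
          _ = _ := by simp [hX1c]
      have h3 : (ec G X1 (X1 ∪ Z)ᶜ : ℝ) ≤ m * r ^ 2 + d * c / (100 * L ^ 2) := by
        have : (ec G X1 (X1 ∪ Z)ᶜ : ℝ) ≤ ec G X1 Bt + ec G P (P ∪ B ∪ Z)ᶜ := by exact_mod_cast h1
        linarith
      refine h3.trans ?_
      have h4 : d * c / (100 * L ^ 2) ≤ d * m / (4 * L) := by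
        have : d * c / (100 * L ^ 2) = d * (c / (25 * L)) / (4 * L) := by field_simp; ring
        rw [this]; gcongr
      have h5 : m * r ^ 2 ≤ d * m / (4 * L) := by
        rw [le_div_iff₀ (by positivity), h.hd]
        have : 4 * L ≤ r ^ 2 := h4L
        have h6 : (m * r ^ 2) * (4 * L) ≤ (m * r ^ 2) * r ^ 2 := by gcongr
        linarith
      have h6 : d * m / (4 * L) + d * m / (4 * L) ≤ d * m / L := by
        have : d * m / (4 * L) + d * m / (4 * L) = (d * m / L) / 2 := by field_simp; ring
        rw [this]
        have : 0 ≤ d * m / L := by positivity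
        linarith
      linarith)
    rw [hX1c] at key
    have h7 : c / (25 * L) / L ≤ m / L := by gcongr
    have h8 : c / (25 * L) / L = 4 * (c / (100 * L ^ 2)) := by field_simp; ring
    have : 0 < c / (100 * L ^ 2) := by positivity
    linarith

lemma step_grow {G : SimpleGraph V} {Y : Set V} {d L r : ℝ} (h : Ctx G Y d L r)
    {P B Bt Bs Z X0 : Finset V} {c c' : ℝ}
    (hP : ∀ x ∈ P, ∀ y ∈ P, ¬ G.Adj x y) (hPB : Disjoint P B) (hBt : Bt = B \ Z)
    (hec : (ec G P (P ∪ B ∪ Z)ᶜ : ℝ) ≤ d * c / (100 * L ^ 2))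
    (hs : c ≤ P.card + B.card) 
    (hZ : (Z.card : ℝ) ≤ c / (100 * L ^ 2))
    (hcd : 100 * L * d ≤ c) (hcc : c ≤ c') (hc1 : c' ≤ (1 + 1 / (4 * L)) * c)
    (hc2 : c' ≤ (1 + 1 / (4 * L)) * (Fintype.card V / 2))
  (hBs : Bs = univ.filter (fun w => w ∉ Z ∧ r ^ 2 ≤ ((Bt.filter (fun b => G.Adj b w)).card : ℝ)))
    (hX0 : X0 = P.filter (fun b => ((Bt.filter (fun x => G.Adj b x)).card : ℝ) < r ^ 2))
    (hlow : (ec G Bt (Bs ∪ Z)ᶜ : ℝ) ≤ d * c / (100 * L ^ 2))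
    (hX0c : (X0.card : ℝ) ≤ c / (20 * L)) :
   c' ≤ Bt.card + Bs.card := by
  obtain ⟨hLpos, hr20, hr2000, hd1, h4L⟩ := h.num
  have hL := h.hL
  have hdpos : 0 < d := by linarith
  have hcpos : 0 < c := lt_of_lt_of_le (by positivity) hcd
  have hc1000 : 100000 * d ≤ c := by nlinarith
  have hLd : L * 4000 ≤ L * d := by gcongr; linarith
  have hBtB : Bt ⊆ B := by rw [hBt]; exact sdiff_subset
  set N2 := Fintype.card V / 2 with hN2
  have hPBt : Disjoint P Bt := hPB.mono_right hBtB
  have hs' : (P ∪ Bt).card = P.card + Bt.card := Finset.card_union_of_disjoint hPBt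
  obtain ⟨S0, hS0, hS0c⟩ := Finset.exists_subset_card_eq (s := P ∪ Bt) (n := min (P ∪ Bt).card N2) (min_le_left _ _)
  have hBB : (B.card : ℝ) ≤ Bt.card + Z.card := by
    have : B.card ≤ Bt.card + Z.card := by
      calc B.card ≤ (Bt ∪ Z).card := card_le_card (by intro x hx; simp [hBt, hx])
        _ ≤ _ := card_union_le _ _
    exact_mod_cast this
  have hs2 : c - c / (100 * L ^ 2) ≤ ((P ∪ Bt).card : ℝ) := by
    rw [hs']; push_cast; linarith
  have hN2r : (Fintype.card V : ℝ) / 2 - 1 ≤ N2 := by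
    have h1 : Fintype.card V ≤ 2 * N2 + 1 := by omega
    have : (Fintype.card V : ℝ) ≤ 2 * N2 + 1 := by exact_mod_cast h1
    linarith
  have hN2u : (N2 : ℝ) ≤ (Fintype.card V : ℝ) / 2 := by
    have h1 : 2 * N2 ≤ Fintype.card V := by omega
    have : (2 * N2 : ℝ) ≤ (Fintype.card V : ℝ) := by exact_mod_cast h1
    linarith
  -- lower bound on S0
  have hcL2 : c / (100 * L ^ 2) ≤ c / (1000 * L) * (1/100) := by
    rw [div_mul_eq_mul_div, div_le_div_iff₀ (by positivity) (by positivity)]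
    have : 1000 * L ≤ L ^ 2 := by nlinarith
    nlinarith
  have hcL3 : 1 ≤ c / (1000 * L) * (1/100) := by
    rw [div_mul_eq_mul_div, le_div_iff₀ (by positivity)]; linarith
  -- u := c' / g
  have hS0l : c' / (1 + 1 / (4 * L)) - c / (1000 * L) ≤ (S0.card : ℝ) := by
    have hg : 0 < 1 + 1 / (4 * L) := by positivity
    have hq1 : c' / (1 + 1 / (4 * L)) ≤ c := by rw [div_le_iff₀ hg]; linarith
    have hq2 : c' / (1 + 1 / (4 * L)) ≤ Fintype.card V / 2 := by rw [div_le_iff₀ hg]; linarith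
    have hq3 : 0 < c / (1000 * L) := by positivity
    rw [hS0c]
    push_cast
    apply le_min <;> linarith
  have hq1 : 0.99 * c ≤ c' / (1 + 1 / (4 * L)) := by
    rw [le_div_iff₀ (by positivity)]
    have hiL : 1 / (4 * L) ≤ 1 / 4000 := by gcongr; linarith
    have : 0.99 * c * (1 + 1 / (4 * L)) ≤ 0.99 * c * (1 + 1 / 4000) := by gcongr
    linarith
  have hcL4 : c / (1000 * L) ≤ c / 1000 := by gcongr; linarith
  have hS0l2 : 0.9 * c ≤ (S0.card : ℝ) := by linarith
  set T := (Bt ∪ Bs ∪ Z) \ S0 with hT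
  have hedge : (ec G S0 (S0 ∪ T)ᶜ : ℝ) ≤ d * c / (100 * L ^ 2) + d * c / (100 * L ^ 2) := by
    have h1 : ec G S0 (S0 ∪ T)ᶜ ≤ ec G P (P ∪ B ∪ Z)ᶜ + ec G Bt (Bs ∪ Z)ᶜ := by
      have e1 : S0 = (S0 ∩ P) ∪ (S0 ∩ Bt) := by
        rw [← Finset.inter_union_distrib_left]; exact (Finset.inter_eq_left.mpr hS0).symm
      have e2 : ec G S0 (S0 ∪ T)ᶜ ≤ ec G (S0 ∩ P) (S0 ∪ T)ᶜ + ec G (S0 ∩ Bt) (S0 ∪ T)ᶜ := by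
        conv_lhs => arg 2; rw [e1]
        exact ec_union_left G _ _ _
      refine e2.trans ?_
      apply Nat.add_le_add
      · unfold ec
        calc _ ≤ ∑ x ∈ S0 ∩ P, ((P ∪ B ∪ Z)ᶜ.filter (fun y => G.Adj x y)).card := by
              apply Finset.sum_le_sum
              intro x hx
              apply card_le_card
              intro y hy
              simp only [hT, hBt, mem_filter, mem_compl, mem_union, not_or, mem_sdiff, mem_inter] at hy hx ⊢
              refine ⟨⟨⟨fun hyP => hP x hx.2 y hyP hy.2, fun hyB => ?_⟩, fun hyZ => ?_⟩, hy.2⟩ <;> tauto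
          _ ≤ _ := Finset.sum_le_sum_of_subset inter_subset_right
      · apply ec_mono inter_subset_right
        intro y hy
        simp only [hT, mem_compl, mem_union, not_or, mem_sdiff] at hy ⊢
        tauto
    have h1' : (ec G S0 (S0 ∪ T)ᶜ : ℝ) ≤ ec G P (P ∪ B ∪ Z)ᶜ + ec G Bt (Bs ∪ Z)ᶜ := by exact_mod_cast h1
    linarith
  have key := h.exp S0 T (by linarith) (by
      refine le_trans ?_ hN2u
      rw [hS0c]; exact_mod_cast min_le_right _ _) (by
      refine hedge.trans ?_
      have h1 : d * c / (100 * L ^ 2) = (d * c / L) * (1 / (100 * L)) := by field_simp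
      have h2 : 1 / (100 * L) ≤ 1 / 100 := by gcongr; linarith
      have h3 : d * c / (100 * L ^ 2) ≤ (d * c / L) * (1 / 100) := by
        rw [h1]; gcongr
      have h4 : d * (0.9 * c) / L ≤ d * S0.card / L := by gcongr
      have h5 : d * (0.9 * c) / L = 0.9 * (d * c / L) := by ring
      have : 0 ≤ d * c / L := by positivity
      linarith)
  -- final count
  have hsub : S0 ⊆ (((Bt ∪ Bs ∪ Z) ∩ S0) ∪ X0) := by
    intro x hx
    have hx2 := hS0 hx
    simp only [mem_union, mem_inter, hX0, mem_filter] at hx2 ⊢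
    by_cases hxP : x ∈ P
    · by_cases hlo : ((Bt.filter (fun y => G.Adj x y)).card : ℝ) < r ^ 2
      · right; exact ⟨hxP, hlo⟩
      · left
        push Not at hlo
        refine ⟨?_, hx⟩
        by_cases hxZ : x ∈ Z
        · right; exact hxZ
        · left; right
          simp only [hBs, mem_filter, mem_univ, true_and]
          refine ⟨hxZ, ?_⟩
          simpa only [G.adj_comm] using hlo
    · left
      have : x ∈ Bt := by tauto
      exact ⟨by tauto, hx⟩
  have hcount : (S0.card : ℝ) + T.card ≤ Bt.card + Bs.card + Z.card + X0.card := by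
    have h1 : S0.card ≤ ((Bt ∪ Bs ∪ Z) ∩ S0).card + X0.card := (card_le_card hsub).trans (card_union_le _ _)
    have h2 : T.card + ((Bt ∪ Bs ∪ Z) ∩ S0).card = (Bt ∪ Bs ∪ Z).card := Finset.card_sdiff_add_card_inter _ _
    have h3 : (Bt ∪ Bs ∪ Z).card ≤ Bt.card + Bs.card + Z.card :=
      (card_union_le _ _).trans (Nat.add_le_add_right (card_union_le _ _) _)
    have : S0.card + T.card ≤ Bt.card + Bs.card + Z.card + X0.card := by omega
    exact_mod_cast this
  have hfin : c' + c / (20 * L) + c / (100 * L ^ 2) ≤ S0.card + S0.card / L := by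
    set u := c' / (1 + 1 / (4 * L)) with hu
    have hc'u : c' = u + u / (4 * L) := by rw [hu]; field_simp
    have hul : u ≤ c := by rw [hu, div_le_iff₀ (by positivity)]; linarith
    have h1 : 0.9 * c / L ≤ S0.card / L := by gcongr
    have h2 : u / (4 * L) ≤ c / (4 * L) := by gcongr
    have e1 : c / (4 * L) = 0.25 * (c / L) := by field_simp; ring
    have e2 : c / (20 * L) = 0.05 * (c / L) := by field_simp; ring
    have e3 : c / (1000 * L) = 0.001 * (c / L) := by field_simp; ring
    have e4 : 0.9 * c / L = 0.9 * (c / L) := by ring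
    have hp : 0 < c / L := by positivity
    rw [e1] at h2; rw [e3] at hS0l hcL2; rw [e4] at h1; rw [e2, hc'u]
    linarith
  linarith
lemma step {G : SimpleGraph V} {Y : Set V} {d L r : ℝ} (h : Ctx G Y d L r)
    {P B Z : Finset V} {c c' : ℝ}
    (hP : ∀ x ∈ P, ∀ y ∈ P, ¬ G.Adj x y) (hPB : Disjoint P B)
    (hec : (ec G P (P ∪ B ∪ Z)ᶜ : ℝ) ≤ d * c / (100 * L ^ 2))
    (hs : c ≤ P.card + B.card) (hB2 : (B.card : ℝ) ≤ 2 * c)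
    (hZ : (Z.card : ℝ) ≤ c / (100 * L ^ 2))
    (hcd : 100 * L * d ≤ c) (hcc : c ≤ c') (hc1 : c' ≤ (1 + 1 / (4 * L)) * c)
    (hc2 : c' ≤ (1 + 1 / (4 * L)) * (Fintype.card V / 2)) :
    ∃ A P' B' : Finset V, A ⊆ B \ Z ∧ (A.card : ℝ) ≤ c / r ∧ Disjoint B' Z ∧
      (∀ w ∈ B', ∃ a ∈ A, G.Adj a w) ∧ P' ⊆ B ∧
      (ec G P' (P' ∪ B' ∪ Z)ᶜ : ℝ) ≤ d * c' / (100 * L ^ 2) ∧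
      c' ≤ P'.card + B'.card ∧ (B'.card : ℝ) ≤ 2 * c' := by
  obtain ⟨hLpos, hr20, hr2000, hd1, h4L⟩ := h.num
  have hL := h.hL
  have hdpos : 0 < d := by linarith
  have hrpos : 0 < r := by linarith
  have hcpos : 0 < c := lt_of_lt_of_le (by positivity) hcd
  have hc1000 : 100000 * d ≤ c := by nlinarith
  have hiL : 1 / (4 * L) ≤ 1 / 4000 := by gcongr; linarith
  have hc'2 : c' ≤ 1.001 * c := by
    have : (1 + 1 / (4 * L)) * c ≤ (1 + 1 / 4000) * c := by gcongr
    linarith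
  set Bt := B \ Z with hBt
  have hBtB : Bt ⊆ B := sdiff_subset
  have hBtZ : Disjoint Bt Z := sdiff_disjoint
  have hBtc : (Bt.card : ℝ) ≤ 2 * c := le_trans (by exact_mod_cast card_le_card hBtB) hB2
  rcases step_cover (G := G) (B := Bt) (Z := Z) (c := c) (r := r) (L := L)
    (by rw [div_div, le_div_iff₀ (by positivity)]; linarith) (by linarith) hr20 h.hlog hBtc hBtZ with
    ⟨A, hA, hAc, hbig⟩ | ⟨hNB, A, hA, hAc, hcov⟩
  · exact step_reset hdpos (by linarith) A hA hAc (univ.filter (fun w => w ∉ Z ∧ ∃ a ∈ A, G.Adj a w)) (by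
      rw [Finset.disjoint_left]; intro w hw; simp at hw; exact hw.1) (by intro w hw; simp at hw; exact hw.2)
      (by linarith)
  set Bs := univ.filter (fun w => w ∉ Z ∧ r ^ 2 ≤ ((Bt.filter (fun b => G.Adj b w)).card : ℝ)) with hBs
  have hBsZ : Disjoint Bs Z := by
    rw [Finset.disjoint_left]; intro w hw; simp [hBs] at hw; exact hw.1
  have hBsA : ∀ w ∈ Bs, ∃ a ∈ A, G.Adj a w := by
    intro w hw; simp [hBs] at hw; exact hcov w hw.2
  by_cases hBsc : c' ≤ Bs.card
  · exact step_reset hdpos (by linarith) A hA hAc Bs hBsZ hBsA hBsc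
  push Not at hBsc
  have hlow := step_low (d := d) h.hd hNB hBs
  set X0 := P.filter (fun b => ((Bt.filter (fun x => G.Adj b x)).card : ℝ) < r ^ 2) with hX0
  have hnc : c ≤ 1.001 * Fintype.card V := by
    have h1 : (1 + 1 / (4 * L)) * ((Fintype.card V : ℝ) / 2) ≤ 1.001 * (Fintype.card V / 2) := by
      gcongr; linarith
    have h0 : (0:ℝ) ≤ Fintype.card V := by positivity
    linarith
  have hX0c := step_X0 h hP hBt hec hZ hcd hnc hX0
  have hgr := step_grow h hP hPB hBt hec hs hZ hcd hcc hc1 hc2 hBs hX0 hlow hX0c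
  refine ⟨A, Bt, Bs, hA, hAc, hBsZ, hBsA, hBtB, ?_, hgr, by linarith⟩
  · have h1 : ec G Bt (Bt ∪ Bs ∪ Z)ᶜ ≤ ec G Bt (Bs ∪ Z)ᶜ := by
      apply ec_mono subset_rfl
      intro y hy; simp only [mem_compl, mem_union, not_or] at hy ⊢; tauto
    have h1' : (ec G Bt (Bt ∪ Bs ∪ Z)ᶜ : ℝ) ≤ ec G Bt (Bs ∪ Z)ᶜ := by exact_mod_cast h1
    refine h1'.trans (hlow.trans ?_)
    gcongr

end TKproof
namespace TKproof

open Classical Finset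

set_option linter.unusedSectionVars false

variable {V : Type} [Fintype V]

/-- `w` is joined to `U` by a path of length `k` whose other vertices lie in `D` -/
def Rch (G : SimpleGraph V) (U D : Finset V) (k : ℕ) (w : V) : Prop :=
  ∃ l : List V, l.length = k ∧ (w :: l).IsChain G.Adj ∧ (w :: l).Nodup ∧ (∀ x ∈ l, x ∈ D) ∧
    ∃ u ∈ U, (w :: l).getLast? = some u

lemma Rch.mono {G : SimpleGraph V} {U U' D D' : Finset V} {k : ℕ} {w : V} (h : Rch G U D k w) (hU : U ⊆ U')
    (hD : D ⊆ D') : Rch G U' D' k w := by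
  obtain ⟨l, h1, h2, h3, h4, u, h5, h6⟩ := h
  exact ⟨l, h1, h2, h3, fun x hx => hD (h4 x hx), u, hU h5, h6⟩

lemma Rch.cons {G : SimpleGraph V} {U D : Finset V} {k : ℕ} {w a : V} (h : Rch G U D k a) (hwa : G.Adj a w)
    (hw : w ∉ D) {D' : Finset V} (hD : D ⊆ D') (ha : a ∈ D') : Rch G U D' (k + 1) w := by
  obtain ⟨l, h1, h2, h3, h4, u, h5, h6⟩ := h
  refine ⟨a :: l, by simp [h1], ?_, ?_, ?_, u, h5, ?_⟩
  · rw [List.isChain_cons_cons]; exact ⟨hwa.symm, h2⟩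
  · rw [List.nodup_cons]; refine ⟨?_, h3⟩
    intro hm
    rcases List.mem_cons.mp hm with rfl | hm
    · exact G.loopless.irrefl _ hwa
    · exact hw (h4 _ hm)
  · intro x hx
    rcases List.mem_cons.mp hx with rfl | hx
    · exact ha
    · exact hD (h4 _ hx)
  · rw [List.getLast?_cons_cons]; exact h6

/-- the state of a growth process -/
structure St (G : SimpleGraph V) (Y : Set V) (d L : ℝ) (U : Finset V) (k : ℕ) (c : ℝ)
    (P B Z D : Finset V) : Prop where
  sB : ∀ b ∈ B, (b ∈ Y ↔ Even k)
  sP : ∀ b ∈ P, (b ∈ Y ↔ ¬ Even k)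
  hec : (ec G P (P ∪ B ∪ Z)ᶜ : ℝ) ≤ d * c / (100 * L ^ 2)
  hs : c ≤ P.card + B.card
  hB2 : (B.card : ℝ) ≤ 2 * c
  rB : ∀ w ∈ B, Rch G U D k w
  rP : ∀ w ∈ P, ∃ k', k = k' + 1 ∧ Rch G U D k' w

lemma St.monoZ {G : SimpleGraph V} {Y : Set V} {d L : ℝ} {U : Finset V} {k : ℕ} {c : ℝ}
    {P B Z Z' D : Finset V} (h : St G Y d L U k c P B Z D) (hZ : Z ⊆ Z') : St G Y d L U k c P B Z' D := by
  refine ⟨h.sB, h.sP, le_trans ?_ h.hec, h.hs, h.hB2, h.rB, h.rP⟩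
  have : ec G P (P ∪ B ∪ Z')ᶜ ≤ ec G P (P ∪ B ∪ Z)ᶜ := by
    apply ec_mono subset_rfl
    intro y hy
    simp only [mem_compl, mem_union, not_or] at hy ⊢
    exact ⟨hy.1, fun hz => hy.2 (hZ hz)⟩
  exact_mod_cast this

lemma St.next {G : SimpleGraph V} {Y : Set V} {d L r : ℝ} (h : Ctx G Y d L r) {U : Finset V} {k : ℕ} {c c' : ℝ}
    {P B Z D : Finset V} (hS : St G Y d L U k c P B Z D) (hDZ : D ⊆ Z)
    (hZ : (Z.card : ℝ) ≤ c / (100 * L ^ 2))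
    (hcd : 100 * L * d ≤ c) (hcc : c ≤ c') (hc1 : c' ≤ (1 + 1 / (4 * L)) * c)
    (hc2 : c' ≤ (1 + 1 / (4 * L)) * (Fintype.card V / 2)) :
    ∃ A P' B' : Finset V, Disjoint A Z ∧ (A.card : ℝ) ≤ c / r ∧
      St G Y d L U (k + 1) c' P' B' (Z ∪ A) (D ∪ A) := by
  obtain ⟨A, P', B', hA, hAc, hBZ, hBA, hPB, hec, hs, hB2⟩ := step h (P := P) (B := B) (Z := Z)
    (by
      intro x hx y hy hxy
      have h1 := h.bip x y hxy
      have h2 := hS.sP x hx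
      have h3 := hS.sP y hy
      tauto)
    (by
      rw [Finset.disjoint_left]
      intro x hx hy
      have h2 := hS.sP x hx
      have h3 := hS.sB x hy
      tauto) hS.hec hS.hs hS.hB2 hZ hcd hcc hc1 hc2
  refine ⟨A, P', B', disjoint_of_subset_left hA sdiff_disjoint, hAc, ?_⟩
  have hAB : A ⊆ B := hA.trans sdiff_subset
  have h0 : St G Y d L U (k + 1) c' P' B' Z (D ∪ A) := by
    refine ⟨?_, ?_, hec, hs, hB2, ?_, ?_⟩
    · intro b hb
      obtain ⟨a, ha, hab⟩ := hBA b hb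
      have h1 := h.bip a b hab
      have h2 := hS.sB a (hAB ha)
      rw [Nat.even_add_one]; tauto
    · intro b hb
      have h2 := hS.sB b (hPB hb)
      rw [Nat.even_add_one]; tauto
    · intro w hw
      obtain ⟨a, ha, hab⟩ := hBA w hw
      refine (hS.rB a (hAB ha)).cons hab ?_ subset_union_left (mem_union_right _ ha)
      intro hD
      exact (Finset.disjoint_left.mp hBZ) hw (hDZ hD)
    · intro w hw
      exact ⟨k, rfl, (hS.rB w (hPB hw)).mono subset_rfl subset_union_left⟩
  exact h0.monoZ subset_union_left

lemma St.init {G : SimpleGraph V} {Y : Set V} {d L c : ℝ} {U : Finset V} (hU : ∀ u ∈ U, u ∈ Y) (hd : 0 ≤ d) (hc : 1 ≤ c)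
    (hUc : c ≤ U.card) : ∃ B, ∀ Z, St G Y d L U 0 c ∅ B Z ∅ := by
  obtain ⟨B, hB, hBc⟩ := Finset.exists_subset_card_eq (s := U) (n := ⌈c⌉₊) (Nat.ceil_le.mpr hUc)
  have hceil := Nat.ceil_lt_add_one (a := c) (by linarith)
  refine ⟨B, fun Z => ⟨?_, by simp, ?_, ?_, ?_, ?_, by simp⟩⟩
  · intro b hb; simp [hU b (hB hb)]
  · simp [ec]; positivity
  · rw [hBc]; simp; exact Nat.le_ceil _
  · rw [hBc]; linarith
  · intro w hw
    exact ⟨[], by simp, by simp, by simp, by simp, w, hB hw, by simp⟩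

end TKproof
namespace TKproof

open Classical Finset

set_option linter.unusedSectionVars false

variable {V : Type} [Fintype V]

/-- sizes of the growing sets -/
noncomputable def cs (d L n : ℝ) (k : ℕ) : ℝ :=
  min (d * L ^ 6 * (1 + 1 / (4 * L)) ^ k) ((1 + 1 / (4 * L)) * (n / 2))

lemma cs_mono {d L n : ℝ} (hd : 0 < d) (hL : 0 < L) (k : ℕ) : cs d L n k ≤ cs d L n (k + 1) := by
  unfold cs
  apply min_le_min_right
  have : (1:ℝ) ≤ 1 + 1 / (4 * L) := by
    have : 0 < 1 / (4 * L) := by positivity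
    linarith
  gcongr
  omega

lemma cs_succ {d L n : ℝ} (hn : 0 ≤ n) (hL : 0 < L) (k : ℕ) :
    cs d L n (k + 1) ≤ (1 + 1 / (4 * L)) * cs d L n k := by
  unfold cs
  have h0 : 0 < 1 / (4 * L) := by positivity
  have h1 : (1:ℝ) ≤ 1 + 1 / (4 * L) := by linarith
  rw [mul_min_of_nonneg _ _ (by linarith)]
  apply min_le_min
  · rw [pow_succ]; apply le_of_eq; ring
  · exact le_mul_of_one_le_left (by positivity) h1

lemma cs_le {d L n : ℝ} (k : ℕ) : cs d L n k ≤ (1 + 1 / (4 * L)) * (n / 2) := min_le_right _ _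

lemma cs_zero_le {d L n : ℝ} (hd : 0 < d) (hL : 1000 ≤ L) (hn : d * L ^ 40 ≤ n) (k : ℕ) : d * L ^ 6 ≤ cs d L n k := by
  unfold cs
  have h0 : 0 < 1 / (4 * L) := by positivity
  have h1 : (1:ℝ) ≤ 1 + 1 / (4 * L) := by linarith
  apply le_min
  · exact le_mul_of_one_le_right (by positivity) (one_le_pow₀ h1)
  · have h2 : d * L ^ 6 * 2 ≤ d * L ^ 40 := by
      have : d * L ^ 40 = d * L ^ 6 * L ^ 34 := by ring
      rw [this]
      gcongr
      calc (2:ℝ) ≤ 1000 ^ 34 := by norm_num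
        _ ≤ _ := by gcongr
    have h3 : 1 * (n / 2) ≤ (1 + 1 / (4 * L)) * (n / 2) := by
      apply mul_le_mul_of_nonneg_right h1
      have : 0 ≤ d * L ^ 40 := by positivity
      linarith
    linarith

lemma cs_last {d L n : ℝ} (hd : 0 < d) (hL : 1000 ≤ L) (hn : n ≤ d * Real.exp L) {T : ℕ} (hT : 8 * L ^ 2 ≤ T) :
    cs d L n T = (1 + 1 / (4 * L)) * (n / 2) := by
  unfold cs
  apply min_eq_right
  have hLp : 0 < L := by linarith
  have h0 : 0 < 1 / (4 * L) := by positivity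
  have h1 : Real.exp (1 / (8 * L)) ≤ 1 + 1 / (4 * L) := by
    have h2 := Real.exp_bound_div_one_sub_of_interval (x := 1 / (8 * L)) (by positivity) (by
      rw [div_lt_one (by positivity)]; linarith)
    refine h2.trans ?_
    have h3 : 0 < 1 - 1 / (8 * L) := by
      rw [sub_pos, div_lt_one (by positivity)]; linarith
    rw [div_le_iff₀ h3]
    have e1 : 1 / (4 * L) = 2 * (1 / (8 * L)) := by field_simp; ring
    rw [e1]
    have h4 : 1 / (8 * L) ≤ 1 / 8000 := by gcongr; linarith
    have h5 : 0 < 1 / (8 * L) := by positivity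
    nlinarith
  have h2 : Real.exp L ≤ (1 + 1 / (4 * L)) ^ T := by
    calc Real.exp L ≤ Real.exp (T * (1 / (8 * L))) := by
          apply Real.exp_le_exp.mpr
          rw [mul_one_div, le_div_iff₀ (by positivity)]; linarith
      _ = Real.exp (1 / (8 * L)) ^ T := Real.exp_nat_mul _ _
      _ ≤ _ := by gcongr
  have h3 : (1 + 1 / (4 * L)) ≤ 2 := by
    have : 1 / (4 * L) ≤ 1 / 4000 := by gcongr; linarith
    linarith
  have h4 : (1 + 1 / (4 * L)) * (n / 2) ≤ d * Real.exp L := by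
    by_cases hn0 : 0 ≤ n
    · nlinarith
    · have : 0 ≤ d * Real.exp L := by positivity
      nlinarith
  refine h4.trans ?_
  have h6 : 1 ≤ L ^ 6 := one_le_pow₀ (by linarith)
  calc d * Real.exp L ≤ d * L ^ 6 * Real.exp L := by
        gcongr; nlinarith
    _ ≤ _ := by gcongr

/-- joint state of the two growth processes -/
def Joint (G : SimpleGraph V) (Y : Set V) (d L r : ℝ) (U C W : Finset V) (k : ℕ) : Prop :=
  ∃ P1 B1 D1 P2 B2 D2 : Finset V,
    St G Y d L U k (cs d L (Fintype.card V) k) P1 B1 (W ∪ D1 ∪ D2) D1 ∧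
    St G Y d L C k (cs d L (Fintype.card V) k) P2 B2 (W ∪ D1 ∪ D2) D2 ∧
    Disjoint D1 D2 ∧ Disjoint D1 W ∧ Disjoint D2 W ∧
    (D1.card + D2.card : ℝ) ≤ 2 * k * (cs d L (Fintype.card V) k / r)

lemma card3 (A B C : Finset V) : ((A ∪ B ∪ C).card : ℝ) ≤ A.card + B.card + C.card := by
  have := (card_union_le (A ∪ B) C).trans (Nat.add_le_add_right (card_union_le A B) _)
  exact_mod_cast this

lemma zbound {c L r w k : ℝ} (hc : 0 < c) (hL : 1000 ≤ L) (hr : L ^ 20 ≤ r) (hw : w ≤ c / (200 * L ^ 2))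
    (hk : k ≤ 20 * L ^ 2) : w + k * (c / r) ≤ c / (100 * L ^ 2) := by
  have hLp : 0 < L := by linarith
  have hrp : 0 < r := lt_of_lt_of_le (by positivity) hr
  have h1 : k * (c / r) ≤ c / (200 * L ^ 2) := by
    calc k * (c / r) ≤ 20 * L ^ 2 * (c / L ^ 20) := by gcongr
      _ ≤ c / (200 * L ^ 2) := by
        have h4 : 4000 ≤ L ^ 16 := by
          calc (4000:ℝ) ≤ 1000 ^ 16 := by norm_num
            _ ≤ _ := by gcongr
        rw [mul_div_assoc', div_le_div_iff₀ (by positivity) (by positivity)]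
        calc 20 * L ^ 2 * c * (200 * L ^ 2) = 4000 * (c * L ^ 4) := by ring
          _ ≤ L ^ 16 * (c * L ^ 4) := by gcongr
          _ = _ := by ring
  have h2 : c / (100 * L ^ 2) = c / (200 * L ^ 2) + c / (200 * L ^ 2) := by field_simp; ring
  linarith

lemma Joint.run {G : SimpleGraph V} {Y : Set V} {d L r : ℝ} (h : Ctx G Y d L r) {U C W : Finset V}
    (hU : ∀ u ∈ U, u ∈ Y) (hC : ∀ u ∈ C, u ∈ Y) (hUc : d * L ^ 6 ≤ U.card) (hCc : d * L ^ 6 ≤ C.card)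
    (hW : (W.card : ℝ) ≤ d * L ^ 4 / 200) {T : ℕ} (hT : (T : ℝ) ≤ 9 * L ^ 2) (k : ℕ) (hk : k ≤ T) :
    Joint G Y d L r U C W k := by
  obtain ⟨hLpos, hr20, hr2000, hd1, h4L⟩ := h.num
  have hL := h.hL
  have hdpos : 0 < d := by linarith
  have hrpos : 0 < r := by linarith
  have hn0 : (0:ℝ) ≤ Fintype.card V := by positivity
  have hL1 : 1 ≤ L ^ 2 := one_le_pow₀ (by linarith)
  induction k with
  | zero =>
    have hc0 : cs d L (Fintype.card V) 0 ≤ d * L ^ 6 := by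
      unfold cs; simp
    have hc1 : 1 ≤ cs d L (Fintype.card V) 0 := by
      refine le_trans ?_ (cs_zero_le hdpos hL h.hn 0)
      have : (1:ℝ) ≤ L ^ 6 := one_le_pow₀ (by linarith)
      nlinarith
    obtain ⟨B1, hB1⟩ := St.init (G := G) (L := L) hU hdpos.le hc1 (hc0.trans hUc)
    obtain ⟨B2, hB2⟩ := St.init (G := G) (L := L) hC hdpos.le hc1 (hc0.trans hCc)
    exact ⟨∅, B1, ∅, ∅, B2, ∅, hB1 _, hB2 _, by simp, by simp, by simp, by simp⟩
  | succ k ih =>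
    obtain ⟨P1, B1, D1, P2, B2, D2, hS1, hS2, hdd, hd1w, hd2w, hcard⟩ := ih (by omega)
    set c := cs d L (Fintype.card V) k with hc
    have hkT : (k:ℝ) + 1 ≤ 9 * L ^ 2 := by
      refine le_trans ?_ hT; exact_mod_cast hk
    have hcl : d * L ^ 6 ≤ c := cs_zero_le hdpos hL h.hn k
    have hcpos : 0 < c := lt_of_lt_of_le (by positivity) hcl
    have hWc : (W.card : ℝ) ≤ c / (200 * L ^ 2) := by
      refine hW.trans ?_
      rw [le_div_iff₀ (by positivity)]
      calc _ = d * L ^ 6 := by ring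
        _ ≤ c := hcl
    have hcd : 100 * L * d ≤ c := by
      refine le_trans ?_ hcl
      have : 100 ≤ L ^ 5 := by
          calc (100:ℝ) ≤ 1000 ^ 5 := by norm_num
            _ ≤ _ := by gcongr
      calc 100 * L * d ≤ L ^ 5 * L * d := by gcongr
        _ = _ := by ring
    have hm := cs_mono (d := d) (L := L) (n := Fintype.card V) hdpos hLpos k
    have hs := cs_succ (d := d) (L := L) (n := Fintype.card V) hn0 hLpos k
    have hle := cs_le (d := d) (L := L) (n := Fintype.card V) (k + 1)
    set c' := cs d L (Fintype.card V) (k + 1) with hc'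
    have hZ1 : ((W ∪ D1 ∪ D2).card : ℝ) ≤ c / (100 * L ^ 2) := by
      have h1 := card3 W D1 D2
      have h2 := zbound (k := 2 * k) hcpos hL h.hr hWc (by linarith)
      linarith
    obtain ⟨A1, P1', B1', hA1, hA1c, hS1'⟩ := hS1.next h (by intro x hx; simp [hx]) hZ1 hcd hm hs hle
    set Z1 := W ∪ D1 ∪ D2 ∪ A1 with hZ1d
    have hZ2 : (Z1.card : ℝ) ≤ c / (100 * L ^ 2) := by
      have h1 := card3 W D1 D2
      have h1' : (Z1.card : ℝ) ≤ (W ∪ D1 ∪ D2).card + A1.card := by exact_mod_cast card_union_le _ _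
      have h2 := zbound (k := 2 * k + 1) hcpos hL h.hr hWc (by linarith)
      linarith
    have hS2Z : St G Y d L C k c P2 B2 Z1 D2 := hS2.monoZ subset_union_left
    obtain ⟨A2, P2', B2', hA2, hA2c, hS2'⟩ := hS2Z.next h (by intro x hx; simp [hZ1d, hx]) hZ2 hcd hm hs hle
    rw [disjoint_left] at hdd hd1w hd2w hA1 hA2
    simp only [hZ1d, mem_union, not_or] at hA1 hA2
    refine ⟨P1', B1', D1 ∪ A1, P2', B2', D2 ∪ A2, ?_, ?_, ?_, ?_, ?_, ?_⟩
    · refine hS1'.monoZ ?_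
      intro x; simp only [hZ1d, mem_union]; tauto
    · refine hS2'.monoZ ?_
      intro x; simp only [hZ1d, mem_union]; tauto
    · rw [disjoint_left]; intro x hx hy
      have := @hdd x; have := @hA1 x; have := @hA2 x
      simp only [mem_union] at hx hy; tauto
    · rw [disjoint_left]; intro x hx hy
      have := @hd1w x; have := @hA1 x
      simp only [mem_union] at hx; tauto
    · rw [disjoint_left]; intro x hx hy
      have := @hd2w x; have := @hA2 x
      simp only [mem_union] at hx; tauto
    · have h1 : ((D1 ∪ A1).card : ℝ) ≤ D1.card + A1.card := by exact_mod_cast card_union_le _ _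
      have h2 : ((D2 ∪ A2).card : ℝ) ≤ D2.card + A2.card := by exact_mod_cast card_union_le _ _
      have h3 : c / r ≤ c' / r := by gcongr
      have h4 : (2 * (k:ℝ) + 2) * (c / r) ≤ (2 * k + 2) * (c' / r) := by gcongr
      push_cast
      linarith

/-- a path of length `m - 1` with ends in the given sets, avoiding `W` -/
def CPath (G : SimpleGraph V) (U C W : Finset V) (m : ℕ) (q : List V) : Prop :=
  q.length = m ∧ q.IsChain G.Adj ∧ q.Nodup ∧ (∀ x ∈ q, x ∉ W) ∧ (∃ u ∈ U, q.head? = some u) ∧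
    ∃ u ∈ C, q.getLast? = some u

lemma glue {G : SimpleGraph V} {U C W D1 D2 : Finset V} {k1 k2 : ℕ} {w : V} (h1 : Rch G U D1 k1 w)
    (h2 : Rch G C D2 k2 w) (hdd : Disjoint D1 D2) (hd1 : Disjoint D1 W) (hd2 : Disjoint D2 W) (hw : w ∉ W) :
    ∃ q, CPath G U C W (k1 + k2 + 1) q := by
  obtain ⟨l, a1, a2, a3, a4, u, a5, a6⟩ := h1
  obtain ⟨m, b1, b2, b3, b4, v, b5, b6⟩ := h2
  rw [disjoint_left] at hdd hd1 hd2
  refine ⟨l.reverse ++ (w :: m), ?_, ?_, ?_, ?_, ⟨u, a5, ?_⟩, v, b5, ?_⟩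
  · simp [a1, b1]; omega
  · rw [List.isChain_append]
    refine ⟨?_, b2, ?_⟩
    · rw [List.isChain_reverse]
      have := a2.tail
      simp only [List.tail_cons] at this
      exact this.imp (fun _ _ h => h.symm)
    · intro x hx y hy
      simp at hy
      subst hy
      cases l with
      | nil => simp at hx
      | cons z l =>
        simp at hx
        subst hx
        rw [List.isChain_cons_cons] at a2
        exact a2.1.symm
  · rw [List.nodup_append]
    rw [List.nodup_cons] at a3
    refine ⟨List.nodup_reverse.mpr a3.2, b3, ?_⟩
    intro x hx y hy hxy
    subst hxy
    simp at hx hy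
    rcases hy with rfl | hy
    · exact a3.1 hx
    · exact hdd (a4 _ hx) (b4 _ hy)
  · intro x hx
    simp at hx
    rcases hx with hx | rfl | hx
    · exact hd1 (a4 _ hx)
    · exact hw
    · exact hd2 (b4 _ hx)
  · cases l with
    | nil => simpa using a6
    | cons z l =>
      rw [List.getLast?_cons_cons] at a6
      rw [List.head?_append, List.head?_reverse, a6]; simp
  · rw [List.getLast?_append, b6]; simp

set_option maxHeartbeats 2000000 in
lemma connect {G : SimpleGraph V} {Y : Set V} {d L r : ℝ} (h : Ctx G Y d L r) {U C W : Finset V}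
    (hU : ∀ u ∈ U, u ∈ Y) (hC : ∀ u ∈ C, u ∈ Y) (hUc : d * L ^ 6 ≤ U.card) (hCc : d * L ^ 6 ≤ C.card)
    (hW : (W.card : ℝ) ≤ d * L ^ 4 / 200) {T : ℕ} (hT8 : 8 * L ^ 2 ≤ T) (hT : (T : ℝ) ≤ 9 * L ^ 2) :
    ∃ q, CPath G U C W (2 * T + 1) q := by
  obtain ⟨hLpos, hr20, hr2000, hd1, h4L⟩ := h.num
  have hL := h.hL
  have hdpos : 0 < d := by linarith
  have hrpos : 0 < r := by linarith
  have hn0 : (0:ℝ) < Fintype.card V := lt_of_lt_of_le (by positivity) h.hn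
  have hL1 : 1 ≤ L ^ 2 := one_le_pow₀ (by linarith)
  obtain ⟨P1, B1, D1, P2, B2, D2, hS1, hS2, hdd, hd1w, hd2w, hcard⟩ := Joint.run h hU hC hUc hCc hW hT T le_rfl
  have hcl : d * L ^ 6 ≤ cs d L (Fintype.card V) T := cs_zero_le hdpos hL h.hn T
  have hce := cs_last (d := d) (L := L) hdpos hL h.hexp hT8
  set c := cs d L (Fintype.card V) T with hc
  have hcpos : 0 < c := lt_of_lt_of_le (by positivity) hcl
  have hWc : (W.card : ℝ) ≤ c / (200 * L ^ 2) := by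
    refine hW.trans ?_
    rw [le_div_iff₀ (by positivity)]
    calc _ = d * L ^ 6 := by ring
      _ ≤ c := hcl
  have hcd : 100 * L * d ≤ c := by
    refine le_trans ?_ hcl
    have : 100 ≤ L ^ 5 := by
        calc (100:ℝ) ≤ 1000 ^ 5 := by norm_num
          _ ≤ _ := by gcongr
    calc 100 * L * d ≤ L ^ 5 * L * d := by gcongr
      _ = _ := by ring
  have hZ1 : ((W ∪ D1 ∪ D2).card : ℝ) ≤ c / (100 * L ^ 2) := by
    have h1 := card3 W D1 D2
    have h2 := zbound (k := 2 * T) hcpos hL h.hr hWc (by linarith)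
    linarith
  have hgpos : 0 < 1 / (4 * L) := by positivity
  obtain ⟨A2, P2', B2', hA2, hA2c, hS2'⟩ := hS2.next h (by intro x hx; simp [hx]) hZ1 hcd le_rfl
    (by nlinarith) hce.le
  set Z := W ∪ D1 ∪ D2 ∪ A2 with hZ
  have hZ2 : (Z.card : ℝ) ≤ c / (100 * L ^ 2) := by
    have h1 := card3 W D1 D2
    have h1' : (Z.card : ℝ) ≤ (W ∪ D1 ∪ D2).card + A2.card := by exact_mod_cast card_union_le _ _
    have h2 := zbound (k := 2 * T + 1) hcpos hL h.hr hWc (by linarith)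
    linarith
  have hk1 : c ≤ ((P1 ∪ B1).card : ℝ) := by
    rw [card_union_of_disjoint]
    · push_cast; exact hS1.hs
    · rw [disjoint_left]; intro x hx hy
      have h2 := hS1.sP x hx
      have h3 := hS1.sB x hy
      tauto
  have hk2 : c ≤ ((P2' ∪ B2').card : ℝ) := by
    rw [card_union_of_disjoint]
    · push_cast; exact hS2'.hs
    · rw [disjoint_left]; intro x hx hy
      have h2 := hS2'.sP x hx
      have h3 := hS2'.sB x hy
      tauto
  have hZlt : (Z.card : ℝ) < 2 * c - Fintype.card V := by
    refine hZ2.trans_lt ?_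
    have e : 2 * c - Fintype.card V = (Fintype.card V : ℝ) / (4 * L) := by rw [hce]; field_simp; ring
    rw [e]
    have hcn : c ≤ Fintype.card V := by
      have : 1 / (4 * L) ≤ 1 / 4000 := by gcongr; linarith
      rw [hce]; nlinarith
    rw [div_lt_div_iff₀ (by positivity) (by positivity)]
    have h1 : c * (4 * L) ≤ Fintype.card V * (4 * L) := by gcongr
    have h2 : (Fintype.card V : ℝ) * (4 * L) < Fintype.card V * (100 * L ^ 2) := by
      gcongr 1
      nlinarith
    linarith
  obtain ⟨w, hw, hwZ⟩ : ∃ w ∈ (P1 ∪ B1) ∩ (P2' ∪ B2'), w ∉ Z := by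
    by_contra hcon
    push Not at hcon
    have h1 : ((P1 ∪ B1) ∩ (P2' ∪ B2')).card ≤ Z.card := card_le_card hcon
    have h2 := card_union_add_card_inter (P1 ∪ B1) (P2' ∪ B2')
    have h3 := card_le_univ ((P1 ∪ B1) ∪ (P2' ∪ B2'))
    have h1' : (((P1 ∪ B1) ∩ (P2' ∪ B2')).card : ℝ) ≤ Z.card := by exact_mod_cast h1
    have h2' : (((P1 ∪ B1) ∪ (P2' ∪ B2')).card : ℝ) + ((P1 ∪ B1) ∩ (P2' ∪ B2')).card =
      (P1 ∪ B1).card + (P2' ∪ B2').card := by exact_mod_cast h2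
    have h3' : (((P1 ∪ B1) ∪ (P2' ∪ B2')).card : ℝ) ≤ Fintype.card V := by exact_mod_cast h3
    linarith
  rw [disjoint_left] at hA2
  have hdd' : Disjoint D1 (D2 ∪ A2) := by
    rw [disjoint_left] at hdd ⊢
    intro x hx hy
    have := @hdd x; have := @hA2 x
    simp only [mem_union] at hy this; tauto
  have hd2' : Disjoint (D2 ∪ A2) W := by
    rw [disjoint_left] at hd2w ⊢
    intro x hx hy
    have := @hd2w x; have := @hA2 x
    simp only [mem_union] at hx this; tauto
  have hwW : w ∉ W := by intro hh; apply hwZ; simp [hZ, hh]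
  simp only [mem_inter, mem_union] at hw
  have hpar : ∀ {a : Prop}, (a ↔ ¬ Even (T + 1)) ↔ (a ↔ Even T) := by
    intro a; rw [Nat.even_add_one]; tauto
  have hpar2 : ∀ {a : Prop}, (a ↔ Even (T + 1)) ↔ (a ↔ ¬ Even T) := by
    intro a; rw [Nat.even_add_one]
  obtain ⟨hw1 | hw1, hw2 | hw2⟩ := hw
  · exfalso
    have h1 := hS1.sP w hw1
    have h2 := hpar.mp (hS2'.sP w hw2)
    tauto
  · obtain ⟨k', hk', hr'⟩ := hS1.rP w hw1
    obtain ⟨q, hq⟩ := glue hr' (hS2'.rB w hw2) hdd' hd1w hd2' hwW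
    refine ⟨q, ?_⟩
    have : 2 * T + 1 = k' + (T + 1) + 1 := by omega
    rw [this]; exact hq
  · obtain ⟨k', hk', hr'⟩ := hS2'.rP w hw2
    obtain ⟨q, hq⟩ := glue (hS1.rB w hw1) hr' hdd' hd1w hd2' hwW
    refine ⟨q, ?_⟩
    have : 2 * T + 1 = T + k' + 1 := by omega
    rw [this]; exact hq
  · exfalso
    have h1 := hS1.sB w hw1
    have h2 := hpar2.mp (hS2'.sB w hw2)
    tauto

end TKproof
namespace TKproof

open Classical Finset

set_option linter.unusedSectionVars false

lemma greedy {ι α : Type} [Fintype ι] [Nonempty α] (Φ : ι → α → Prop) (R : ι → ι → α → α → Prop)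
    (hsymm : ∀ i j a b, R i j a b → R j i b a)
    (ext : ∀ (s : Finset ι) (f : ι → α), (∀ i ∈ s, Φ i (f i)) →
      (∀ i ∈ s, ∀ j ∈ s, i ≠ j → R i j (f i) (f j)) →
      ∀ i, i ∉ s → ∃ a, Φ i a ∧ ∀ j ∈ s, R i j a (f j)) :
    ∃ f : ι → α, (∀ i, Φ i (f i)) ∧ ∀ i j, i ≠ j → R i j (f i) (f j) := by
  have key : ∀ s : Finset ι, ∃ f : ι → α, (∀ i ∈ s, Φ i (f i)) ∧
      (∀ i ∈ s, ∀ j ∈ s, i ≠ j → R i j (f i) (f j)) := by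
    intro s
    induction s using Finset.induction_on with
    | empty => exact ⟨fun _ => Classical.arbitrary α, by simp, by simp⟩
    | insert i s his ih =>
      obtain ⟨f, hf1, hf2⟩ := ih
      obtain ⟨a, ha1, ha2⟩ := ext s f hf1 hf2 i his
      have hne : ∀ j ∈ s, Function.update f i a j = f j := by
        intro j hj
        rw [Function.update_of_ne]
        rintro rfl; exact his hj
      refine ⟨Function.update f i a, ?_, ?_⟩
      · intro j hj
        rcases mem_insert.mp hj with rfl | hj
        · simpa using ha1
        · rw [hne j hj]; exact hf1 j hj
      · intro j hj k hk hjk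
        rcases mem_insert.mp hj with hj' | hj' <;> rcases mem_insert.mp hk with hk' | hk'
        · exact absurd (hj'.trans hk'.symm) hjk
        · rw [hne k hk', hj']; simpa using ha2 k hk'
        · rw [hne j hj', hk']; simpa using hsymm _ _ _ _ (ha2 j hj')
        · rw [hne j hj', hne k hk']; exact hf2 j hj' k hk' hjk
  obtain ⟨f, h1, h2⟩ := key univ
  exact ⟨f, fun i => h1 i (mem_univ _), fun i j => h2 i (mem_univ _) j (mem_univ _)⟩

variable {V : Type} [Fintype V]

lemma good_vertex {G : SimpleGraph V} {Y : Set V} {d L r : ℝ} (h : Ctx G Y d L r) {Z : Finset V}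
    (hZ : (Z.card : ℝ) < Fintype.card V / (8 * L)) :
    ∃ v, v ∉ Y ∧ v ∉ Z ∧ d / L ≤ ((univ.filter (fun w => G.Adj v w ∧ w ∉ Z)).card : ℝ) := by
  by_contra hcon
  push Not at hcon
  obtain ⟨hLpos, hr20, hr2000, hd1, h4L⟩ := h.num
  have hL := h.hL
  have hdpos : 0 < d := by linarith
  have hn : 8 * d ≤ Fintype.card V := by
    refine le_trans ?_ h.hn
    have : 8 ≤ L ^ 40 := by
      calc (8:ℝ) ≤ 1000 ^ 40 := by norm_num
        _ ≤ _ := by gcongr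
    nlinarith
  have hn0 : (0:ℝ) < Fintype.card V := by linarith
  have h8 : (Fintype.card V : ℝ) / (8 * L) ≤ Fintype.card V / 8 := by
    gcongr; linarith
  have hsz : (Fintype.card V : ℝ) / 2 - Z.card ≤ (((univ.filter (fun v => v ∉ Y)) \ Z).card : ℝ) := by
    have h1 : (univ.filter (fun v => v ∉ Y)).card ≤ ((univ.filter (fun v => v ∉ Y)) \ Z).card + Z.card := by
      calc _ ≤ (((univ.filter (fun v => v ∉ Y)) \ Z) ∪ Z).card := card_le_card (by intro x; simp; tauto)
        _ ≤ _ := card_union_le _ _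
    have h2 : ((univ.filter (fun v => v ∉ Y)).card : ℝ) ≤ ((univ.filter (fun v => v ∉ Y)) \ Z).card + Z.card := by
      exact_mod_cast h1
    have := h.half
    linarith
  have hceil := Nat.ceil_lt_add_one (a := (Fintype.card V : ℝ) / 4) (by positivity)
  have hceil' := Nat.le_ceil ((Fintype.card V : ℝ) / 4)
  obtain ⟨Q, hQ, hQc⟩ := Finset.exists_subset_card_eq (s := (univ.filter (fun v => v ∉ Y)) \ Z)
    (n := ⌈(Fintype.card V : ℝ) / 4⌉₊) (by
      have : ((⌈(Fintype.card V : ℝ) / 4⌉₊ : ℕ) : ℝ) ≤ ((univ.filter (fun v => v ∉ Y)) \ Z).card := by linarith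
      exact_mod_cast this)
  have hQr : (Q.card : ℝ) = (⌈(Fintype.card V : ℝ) / 4⌉₊ : ℕ) := by rw [hQc]
  have key := h.exp Q Z (by linarith) (by linarith) (by
    unfold ec
    push_cast
    calc _ ≤ ∑ x ∈ Q, d / L := by
          apply Finset.sum_le_sum
          intro x hx
          have hx' := hQ hx
          simp at hx'
          refine le_trans ?_ (hcon x hx'.1 hx'.2).le
          have : ((Q ∪ Z)ᶜ.filter (fun y => G.Adj x y)).card ≤ (univ.filter (fun w => G.Adj x w ∧ w ∉ Z)).card := by
            apply card_le_card
            intro y hy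
            simp at hy ⊢
            tauto
          exact_mod_cast this
      _ = _ := by simp; ring)
  have h9 : (Fintype.card V : ℝ) / 4 / L ≤ Q.card / L := by gcongr; linarith
  have e : (Fintype.card V : ℝ) / 4 / L = 2 * (Fintype.card V / (8 * L)) := by field_simp; ring
  have : 0 < (Fintype.card V : ℝ) / (8 * L) := by positivity
  linarith

lemma card_biUnion_le' {ι : Type} (s : Finset ι) (f : ι → Finset V) (a : ℝ) (q : ℝ) (hq : (s.card : ℝ) ≤ q) (ha : 0 ≤ a)
    (h : ∀ i ∈ s, ((f i).card : ℝ) ≤ a) : ((s.biUnion f).card : ℝ) ≤ q * a := by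
  calc ((s.biUnion f).card : ℝ) ≤ ∑ i ∈ s, ((f i).card : ℝ) := by exact_mod_cast card_biUnion_le
    _ ≤ ∑ i ∈ s, a := Finset.sum_le_sum h
    _ = s.card * a := by simp
    _ ≤ q * a := by gcongr

lemma stars {G : SimpleGraph V} {Y : Set V} {d L r : ℝ} (h : Ctx G Y d L r) (Z0 : Finset V) (q s : ℕ)
    (hs : (s : ℝ) ≤ d / L) (hZ : (Z0.card : ℝ) + q * (s + 1) < Fintype.card V / (8 * L)) :
    ∃ (cen : Fin q → V) (st : Fin q → Finset V), (∀ i, cen i ∉ Y ∧ cen i ∉ Z0 ∧ (st i).card = s ∧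
      ∀ x ∈ st i, G.Adj (cen i) x) ∧ ∀ i j, i ≠ j → cen i ≠ cen j ∧ Disjoint (st i) (st j) := by
  have hne : Nonempty V := by
    by_contra hcon
    rw [not_nonempty_iff] at hcon
    have : Fintype.card V = 0 := Fintype.card_eq_zero
    rw [this] at hZ
    simp at hZ
    have : (0:ℝ) ≤ Z0.card + q * (s + 1) := by positivity
    linarith
  obtain ⟨f, hf1, hf2⟩ := greedy (ι := Fin q) (α := V × Finset V)
    (fun _ a => a.1 ∉ Y ∧ a.1 ∉ Z0 ∧ a.2.card = s ∧ ∀ x ∈ a.2, G.Adj a.1 x)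
    (fun _ _ a b => a.1 ≠ b.1 ∧ Disjoint a.2 b.2) (fun _ _ _ _ hab => ⟨hab.1.symm, hab.2.symm⟩) (by
      intro S f hf _ i _
      set Z := Z0 ∪ S.biUnion (fun j => insert (f j).1 (f j).2) with hZd
      have hb := card_biUnion_le' S (fun j => insert (f j).1 (f j).2) (s + 1) q (by
        have := card_le_univ S
        simp at this
        exact_mod_cast this) (by positivity) (by
          intro j hj
          have h1 := card_insert_le (f j).1 (f j).2
          rw [(hf j hj).2.2.1] at h1
          exact_mod_cast h1)
      have hZc : (Z.card : ℝ) ≤ Z0.card + (S.biUnion (fun j => insert (f j).1 (f j).2)).card := by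
        exact_mod_cast card_union_le _ _
      obtain ⟨v, hvY, hvZ, hv⟩ := good_vertex h (Z := Z) (by linarith)
      obtain ⟨N, hN, hNc⟩ := Finset.exists_subset_card_eq (s := univ.filter (fun w => G.Adj v w ∧ w ∉ Z)) (n := s) (by
        have := hs.trans hv
        exact_mod_cast this)
      refine ⟨(v, N), ⟨hvY, fun hh => hvZ (mem_union_left _ hh), hNc, fun x hx => ?_⟩, ?_⟩
      · have := hN hx
        simp at this; exact this.1
      · intro j hj
        refine ⟨?_, ?_⟩
        · intro hh
          apply hvZ
          apply mem_union_right
          rw [mem_biUnion]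
          exact ⟨j, hj, by rw [show v = (f j).1 from hh]; exact mem_insert_self _ _⟩
        · rw [disjoint_left]
          intro x hx hxj
          have := hN hx
          simp only [mem_filter] at this
          apply this.2.2
          apply mem_union_right
          rw [mem_biUnion]
          exact ⟨j, hj, mem_insert_of_mem hxj⟩)
  exact ⟨fun i => (f i).1, fun i => (f i).2, hf1, hf2⟩

end TKproof
namespace TKproof

open Classical Finset

set_option linter.unusedSectionVars false

variable {V : Type} [Fintype V]

/-- parameters -/
structure Par (d L r : ℝ) (T t m p s : ℕ) : Prop where
  T8 : 8 * L ^ 2 ≤ T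
  T9 : (T : ℝ) ≤ 9 * L ^ 2
  t0 : r ^ 2 ≤ t
  t1 : (t : ℝ) ≤ 2 * r ^ 2
  m0 : r ^ 2 * L ^ 6 ≤ m
  m1 : (m : ℝ) ≤ 2 * (r ^ 2 * L ^ 6)
  p0 : 2 * L ^ 7 ≤ p
  p1 : (p : ℝ) ≤ 3 * L ^ 7
  s0 : d / (2 * L) ≤ s
  s1 : (s : ℝ) ≤ d / L

lemma powL {L : ℝ} (hL : 1000 ≤ L) (a b : ℕ) (hab : a < b) (k : ℝ) (hk : k ≤ 1000) : k * L ^ a ≤ L ^ b := by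
  have hLp : 0 < L := by linarith
  calc k * L ^ a ≤ L * L ^ a := by gcongr; linarith
    _ = L ^ (a + 1) := by ring
    _ ≤ L ^ b := by gcongr; linarith; omega

lemma Par.num {d L r n : ℝ} {T t m p s : ℕ} (h : Par d L r T t m p s) (hd : d = r ^ 4) (hL : 1000 ≤ L)
    (hr : L ^ 20 ≤ r) (hn : d * L ^ 40 ≤ n) {z : ℝ} (hz : z ≤ 300 * d * L ^ 2) :
    (m : ℝ) ≤ d / L ∧ z + p * (s + 1) < n / (8 * L) ∧
    z + p + (p * (3 * t) + t) * (m + 1) < n / (8 * L) ∧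
    d * L ^ 6 ≤ p * s ∧ d * L ^ 6 ≤ t * m ∧
    z + p + (p * (3 * t) + t) + (p * (3 * t)) * (2 * T + 1) ≤ d * L ^ 4 / 200 := by
  have hLp : 0 < L := by linarith
  have hL1 : 1 ≤ L := by linarith
  have hr1 : 1 ≤ r := le_trans (one_le_pow₀ hL1) hr
  have hrp : 0 < r := by linarith
  have hr2 : L ^ 40 ≤ r ^ 2 := by
    calc L ^ 40 = (L ^ 20) ^ 2 := by ring
      _ ≤ _ := by gcongr
  have hr21 : 1 ≤ r ^ 2 := one_le_pow₀ hr1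
  have hd1 : 1 ≤ d := by rw [hd]; exact one_le_pow₀ hr1
  have hdp : 0 < d := by linarith
  have hn8 : d * L ^ 38 < n / (8 * L) := by
    rw [lt_div_iff₀ (by positivity)]
    refine lt_of_lt_of_le ?_ hn
    calc d * L ^ 38 * (8 * L) = d * (8 * L ^ 39) := by ring
      _ < d * L ^ 40 := by
        gcongr
        calc 8 * L ^ 39 < 1000 * L ^ 39 := by gcongr; norm_num
          _ ≤ L ^ 40 := powL hL _ _ (by norm_num) _ (by norm_num)
  have hT9 := h.T9; have ht0 := h.t0; have ht1 := h.t1; have hm0 := h.m0; have hm1 := h.m1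
  have hp0 := h.p0; have hp1 := h.p1; have hs0 := h.s0; have hs1 := h.s1
  have hz2 : z ≤ d * L ^ 3 := by
    calc z ≤ d * (300 * L ^ 2) := by linarith
      _ ≤ d * L ^ 3 := by gcongr; exact powL hL _ _ (by norm_num) _ (by norm_num)
  have hp8 : (p:ℝ) ≤ L ^ 8 := hp1.trans (powL hL _ _ (by norm_num) _ (by norm_num))
  have hk : (p : ℝ) * (3 * t) + t ≤ r ^ 2 * L ^ 8 := by
    calc (p : ℝ) * (3 * t) + t ≤ (3 * L ^ 7) * (3 * (2 * r ^ 2)) + 2 * r ^ 2 := by gcongr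
      _ = r ^ 2 * (18 * L ^ 7 + 2 * 1) := by ring
      _ ≤ r ^ 2 * (18 * L ^ 7 + 2 * L ^ 7) := by gcongr; exact one_le_pow₀ hL1
      _ = r ^ 2 * (20 * L ^ 7) := by ring
      _ ≤ _ := by gcongr; exact powL hL _ _ (by norm_num) _ (by norm_num)
  have hm7 : (m : ℝ) + 1 ≤ r ^ 2 * L ^ 7 := by
    calc (m : ℝ) + 1 ≤ 2 * (r ^ 2 * L ^ 6) + r ^ 2 * L ^ 6 := by
          gcongr
          exact one_le_mul_of_one_le_of_one_le hr21 (one_le_pow₀ hL1)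
      _ = r ^ 2 * (3 * L ^ 6) := by ring
      _ ≤ _ := by gcongr; exact powL hL _ _ (by norm_num) _ (by norm_num)
  have h20 : ∀ a : ℕ, a ≤ 19 → d * L ^ a ≤ d * L ^ 19 := by
    intro a ha; gcongr
  have h3 : 3 * (d * L ^ 19) ≤ d * L ^ 38 := by
    calc 3 * (d * L ^ 19) = d * (3 * L ^ 19) := by ring
      _ ≤ _ := by gcongr; exact powL hL _ _ (by norm_num) _ (by norm_num)
  have hLdd : d / L ≤ d := div_le_self hdp.le hL1
  refine ⟨?_, ?_, ?_, ?_, ?_, ?_⟩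
  · rw [le_div_iff₀ hLp, hd]
    calc (m : ℝ) * L ≤ 2 * (r ^ 2 * L ^ 6) * L := by gcongr
      _ = r ^ 2 * (2 * L ^ 7) := by ring
      _ ≤ r ^ 2 * L ^ 40 := by gcongr; exact powL hL _ _ (by norm_num) _ (by norm_num)
      _ ≤ r ^ 2 * r ^ 2 := by gcongr
      _ = _ := by ring
  · refine lt_of_le_of_lt ?_ hn8
    have h1 : (p:ℝ) * (s + 1) ≤ d * L ^ 9 := by
      calc (p:ℝ) * (s + 1) ≤ L ^ 8 * (d + d) := by gcongr; linarith
        _ = d * (2 * L ^ 8) := by ring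
        _ ≤ _ := by gcongr; exact powL hL _ _ (by norm_num) _ (by norm_num)
    have := h20 3 (by norm_num)
    have := h20 9 (by norm_num)
    have : 0 < d * L ^ 19 := by positivity
    linarith
  · refine lt_of_le_of_lt ?_ hn8
    have h1 : ((p : ℝ) * (3 * t) + t) * (m + 1) ≤ d * L ^ 15 := by
      calc ((p : ℝ) * (3 * t) + t) * (m + 1) ≤ (r ^ 2 * L ^ 8) * (r ^ 2 * L ^ 7) := by gcongr
        _ = d * L ^ 15 := by rw [hd]; ring
    have h2 : (p : ℝ) ≤ d * L ^ 8 := hp8.trans (le_mul_of_one_le_left (by positivity) hd1)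
    have := h20 3 (by norm_num)
    have := h20 15 (by norm_num)
    have := h20 8 (by norm_num)
    linarith
  · calc d * L ^ 6 = (2 * L ^ 7) * (d / (2 * L)) := by field_simp
      _ ≤ _ := by gcongr
  · calc d * L ^ 6 = r ^ 2 * (r ^ 2 * L ^ 6) := by rw [hd]; ring
      _ ≤ _ := by gcongr
  · have h1 : (p : ℝ) * (3 * t) * (2 * T + 1) ≤ r ^ 2 * L ^ 11 := by
      have ht : (0:ℝ) ≤ t := by positivity
      calc (p : ℝ) * (3 * t) * (2 * T + 1) ≤ (r ^ 2 * L ^ 8) * (2 * (9 * L ^ 2) + L ^ 2) := by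
            have e1 : (p : ℝ) * (3 * t) ≤ r ^ 2 * L ^ 8 := by linarith
            have e2 : (1:ℝ) ≤ L ^ 2 := one_le_pow₀ hL1
            apply mul_le_mul e1 (by linarith) (by positivity) (by positivity)
        _ = r ^ 2 * (19 * L ^ 10) := by ring
        _ ≤ _ := by gcongr; exact powL hL _ _ (by norm_num) _ (by norm_num)
    have h2 : (p : ℝ) ≤ r ^ 2 * L ^ 11 := by
      calc (p:ℝ) ≤ L ^ 8 := hp8
        _ ≤ 1 * L ^ 11 := by rw [one_mul]; gcongr; norm_num
        _ ≤ _ := by gcongr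
    have h3 : r ^ 2 * L ^ 8 ≤ r ^ 2 * L ^ 11 := by gcongr; norm_num
    have h4 : 1000 * (r ^ 2 * L ^ 11) ≤ d * L ^ 4 := by
      calc 1000 * (r ^ 2 * L ^ 11) = r ^ 2 * (1000 * L ^ 11) := by ring
        _ ≤ r ^ 2 * L ^ 40 := by gcongr; exact powL hL _ _ (by norm_num) _ (by norm_num)
        _ ≤ r ^ 2 * r ^ 2 := by gcongr
        _ = d * 1 := by rw [hd]; ring
        _ ≤ _ := by gcongr; exact one_le_pow₀ hL1
    have h5 : 1000 * z ≤ 1000 * (d * L ^ 3) := by gcongr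
    have h6 : 1000 * (d * L ^ 3) ≤ d * L ^ 4 := by
      calc _ = d * (1000 * L ^ 3) := by ring
        _ ≤ _ := by gcongr; exact powL hL _ _ (by norm_num) _ (by norm_num)
    have h7 : 0 ≤ d * L ^ 4 := by positivity
    linarith

lemma biUnion_card_eq {q m : ℕ} (S : Finset (Fin q)) (st : Fin q → Finset V) (hm : ∀ i, (st i).card = m)
    (hd : ∀ i j, i ≠ j → Disjoint (st i) (st j)) : (S.biUnion st).card = S.card * m := by
  rw [card_biUnion (fun i _ j _ hij => hd i j hij)]
  simp [hm]

lemma branches {G : SimpleGraph V} {Y : Set V} {d L r : ℝ} (h : Ctx G Y d L r) {T t m p s k : ℕ}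
    (hT8 : 8 * L ^ 2 ≤ T) (hT9 : (T : ℝ) ≤ 9 * L ^ 2) (W0 : Finset V) {N : Fin p → Finset V} {st : Fin (k + t) → Finset V}
    (hN : ∀ i, ∀ x ∈ N i, x ∈ Y) (hst : ∀ i, ∀ x ∈ st i, x ∈ Y) (hNc : ∀ i, (N i).card = s)
    (hstc : ∀ i, (st i).card = m) (hNd : ∀ i j, i ≠ j → Disjoint (N i) (N j))
    (hstd : ∀ i j, i ≠ j → Disjoint (st i) (st j)) (hps : d * L ^ 6 ≤ p * s) (htm : d * L ^ 6 ≤ t * m)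
    (hW : (W0.card : ℝ) + k * (2 * T + 1) ≤ d * L ^ 4 / 200) (hp : 0 < p) (ht : 0 < t) :
    ∃ f : Fin k → Fin p × Fin (k + t) × List V, (∀ i, CPath G (N (f i).1) (st (f i).2.1) W0 (2 * T + 1) (f i).2.2) ∧
      ∀ i j, i ≠ j → (f i).2.1 ≠ (f j).2.1 ∧ List.Disjoint (f i).2.2 (f j).2.2 := by
  have : Nonempty (Fin p) := ⟨⟨0, hp⟩⟩
  have : Nonempty (Fin (k + t)) := ⟨⟨0, by omega⟩⟩
  apply greedy (ι := Fin k) (α := Fin p × Fin (k + t) × List V)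
    (fun _ a => CPath G (N a.1) (st a.2.1) W0 (2 * T + 1) a.2.2)
    (fun _ _ a b => a.2.1 ≠ b.2.1 ∧ List.Disjoint a.2.2 b.2.2) (fun _ _ _ _ hab => ⟨hab.1.symm, hab.2.symm⟩)
  intro S f hf _ i hi
  have hSk : S.card ≤ k := by simpa using card_le_univ S
  set W := W0 ∪ S.biUnion (fun j => (f j).2.2.toFinset) with hWd
  set S' := (S.image (fun j => (f j).2.1))ᶜ with hS'
  have hS'c : t ≤ S'.card := by
    rw [hS', card_compl]
    have := card_image_le (s := S) (f := fun j => (f j).2.1)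
    simp; omega
  obtain ⟨q, hq1, hq2, hq3, hq4, ⟨u, hu, hqu⟩, v, hv, hqv⟩ := connect h (U := univ.biUnion N) (C := S'.biUnion st)
    (W := W) (by
      intro u hu; rw [mem_biUnion] at hu; obtain ⟨a, _, ha⟩ := hu; exact hN a u ha) (by
      intro u hu; rw [mem_biUnion] at hu; obtain ⟨a, _, ha⟩ := hu; exact hst a u ha) (by
      rw [biUnion_card_eq _ _ hNc hNd]; simpa using hps) (by
      rw [biUnion_card_eq _ _ hstc hstd]; push_cast
      refine htm.trans ?_
      gcongr) (by
      have hb := card_biUnion_le' S (fun j => (f j).2.2.toFinset) (2 * T + 1) k (by exact_mod_cast hSk) (by positivity) (by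
        intro j hj
        have h1 := List.toFinset_card_le (f j).2.2
        rw [(hf j hj).1] at h1
        exact_mod_cast h1)
      have hZc : (W.card : ℝ) ≤ W0.card + (S.biUnion (fun j => (f j).2.2.toFinset)).card := by
        exact_mod_cast card_union_le _ _
      linarith) hT8 hT9
  rw [mem_biUnion] at hu hv
  obtain ⟨a, _, ha⟩ := hu
  obtain ⟨b, hb, hvb⟩ := hv
  refine ⟨(a, b, q), ⟨hq1, hq2, hq3, ?_, ⟨u, ha, hqu⟩, v, hvb, hqv⟩, ?_⟩
  · intro x hx hxW
    exact hq4 x hx (mem_union_left _ hxW)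
  · intro j hj
    refine ⟨?_, ?_⟩
    · intro hbj
      simp only [hS', mem_compl, mem_image, not_exists, not_and] at hb
      exact hb j hj hbj.symm
    · intro x hx hxj
      apply hq4 x hx
      apply mem_union_right
      rw [mem_biUnion]
      exact ⟨j, hj, by simpa using hxj⟩

/-- a unit: a core with `k` branches ending in stars -/
structure UnitP (G : SimpleGraph V) (Y : Set V) (T k m : ℕ) (Z0 : Finset V) (core : V) (br : Fin k → List V)
    (st : Fin k → Finset V) : Prop where
  core_Z : core ∉ Z0
  chain : ∀ i, (core :: br i).IsChain G.Adj
  nodup : ∀ i, (core :: br i).Nodup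
  len : ∀ i, (br i).length = 2 * T + 2
  br_Z : ∀ i, ∀ x ∈ br i, x ∉ Z0
  st_Y : ∀ i, ∀ x ∈ st i, x ∈ Y
  st_adj : ∀ i, ∀ x ∈ st i, ∀ c, (br i).getLast? = some c → G.Adj c x
  st_card : ∀ i, (st i).card = m
  br_disj : ∀ i j, i ≠ j → List.Disjoint (br i) (br j)
  st_disj : ∀ i j, i ≠ j → Disjoint (st i) (st j)

end TKproof
namespace TKproof

open Classical Finset

set_option linter.unusedSectionVars false

variable {V : Type} [Fintype V]

set_option maxHeartbeats 1000000 in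
lemma unit_exists {G : SimpleGraph V} {Y : Set V} {d L r : ℝ} (h : Ctx G Y d L r) {T t m p s : ℕ}
    (hp : Par d L r T t m p s) (Z0 : Finset V) (hZ0 : (Z0.card : ℝ) ≤ 300 * d * L ^ 2) :
    ∃ core br st, UnitP G Y T (3 * t) m Z0 core br st := by
  obtain ⟨hLpos, hr20, hr2000, hd1, h4L⟩ := h.num
  have hL := h.hL
  have hrpos : 0 < r := by linarith
  obtain ⟨n1, n2, n3, n4, n5, n6⟩ := hp.num h.hd hL h.hr h.hn hZ0
  have hppos : 0 < p := by
    have : (0:ℝ) < p := lt_of_lt_of_le (by positivity) hp.p0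
    exact_mod_cast this
  have htpos : 0 < t := by
    have : (0:ℝ) < t := lt_of_lt_of_le (by positivity) hp.t0
    exact_mod_cast this
  obtain ⟨core, N, hcore, hcored⟩ := stars h Z0 p s hp.s1 n2
  have hcc : ((univ.image core).card : ℝ) ≤ p := by
    have : (univ.image core).card ≤ p := by simpa using card_image_le (s := univ) (f := core)
    exact_mod_cast this
  have hu1 : ((Z0 ∪ univ.image core).card : ℝ) ≤ Z0.card + (univ.image core).card := by
    exact_mod_cast card_union_le _ _
  obtain ⟨cen, st, hcen, hcend⟩ := stars h (Z0 ∪ univ.image core) (p * (3 * t) + t) m n1 (by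
    push_cast; linarith)
  have hcc2 : ((univ.image cen).card : ℝ) ≤ p * (3 * t) + t := by
    have : (univ.image cen).card ≤ p * (3 * t) + t := by simpa using card_image_le (s := univ) (f := cen)
    exact_mod_cast this
  set W0 := Z0 ∪ univ.image core ∪ univ.image cen with hW0
  have hu2 : (W0.card : ℝ) ≤ (Z0 ∪ univ.image core).card + (univ.image cen).card := by
    exact_mod_cast card_union_le _ _
  have hYadj : ∀ {v x : V}, v ∉ Y → G.Adj v x → x ∈ Y := by
    intro v x hv hvx
    have := h.bip v x hvx
    tauto
  obtain ⟨f, hf1, hf2⟩ := branches h (k := p * (3 * t)) (t := t) hp.T8 hp.T9 W0 (N := N) (st := st)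
    (fun i x hx => hYadj (hcore i).1 ((hcore i).2.2.2 x hx)) (fun i x hx => hYadj (hcen i).1 ((hcen i).2.2.2 x hx))
    (fun i => (hcore i).2.2.1) (fun i => (hcen i).2.2.1) (fun i j hij => (hcored i j hij).2)
    (fun i j hij => (hcend i j hij).2) n4 n5 (by push_cast; linarith) hppos htpos
  obtain ⟨a, _, ha⟩ := Finset.exists_le_card_fiber_of_mul_le_card_of_maps_to (s := univ) (t := univ)
    (f := fun i => (f i).1) (n := 3 * t) (fun i _ => mem_univ _) ⟨⟨0, hppos⟩, mem_univ _⟩ (by simp)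
  set e := Finset.orderEmbOfCardLe _ ha with he
  have hea : ∀ i, (f (e i)).1 = a := by
    intro i
    have := Finset.orderEmbOfCardLe_mem _ ha i
    simp only [mem_filter] at this
    exact this.2
  have hcoreW : ∀ i, core i ∈ W0 := by intro i; simp [hW0]
  have hcenW : ∀ i, cen i ∈ W0 := by intro i; simp [hW0]
  have hne : ∀ i j, core i ≠ cen j := by
    intro i j hij
    apply (hcen j).2.1
    rw [← hij]; simp
  refine ⟨core a, fun i => (f (e i)).2.2 ++ [cen (f (e i)).2.1], fun i => st (f (e i)).2.1, ?_⟩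
  refine ⟨(hcore a).2.1, ?_, ?_, ?_, ?_, ?_, ?_, ?_, ?_, ?_⟩
  · intro i
    obtain ⟨q1, q2, q3, q4, ⟨u, hu, q5⟩, v, hv, q6⟩ := hf1 (e i)
    rw [hea] at hu
    rw [List.isChain_cons, List.isChain_append]
    refine ⟨?_, q2, by simp, ?_⟩
    · intro y hy
      rw [List.head?_append, q5] at hy
      simp at hy
      subst hy
      exact (hcore a).2.2.2 _ hu
    · intro x hx y hy
      rw [q6] at hx
      simp at hx hy
      subst hx; subst hy
      exact ((hcen _).2.2.2 _ hv).symm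
  · intro i
    obtain ⟨q1, q2, q3, q4, ⟨u, hu, q5⟩, v, hv, q6⟩ := hf1 (e i)
    rw [List.nodup_cons, List.nodup_append]
    refine ⟨?_, q3, by simp, ?_⟩
    · intro hx
      rw [List.mem_append] at hx
      rcases hx with hx | hx
      · exact q4 _ hx (hcoreW a)
      · simp at hx; exact hne _ _ hx
    · intro x hx y hy hxy
      simp at hy
      subst hy; subst hxy
      exact q4 _ hx (hcenW _)
  · intro i
    simp [(hf1 (e i)).1]
  · intro i x hx
    rw [List.mem_append] at hx
    rcases hx with hx | hx
    · intro hz; exact (hf1 (e i)).2.2.2.1 x hx (by simp [hW0, hz])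
    · simp at hx; subst hx
      intro hz; exact (hcen _).2.1 (mem_union_left _ hz)
  · intro i x hx
    exact hYadj (hcen _).1 ((hcen _).2.2.2 x hx)
  · intro i x hx c hc
    simp at hc
    subst hc
    exact (hcen _).2.2.2 x hx
  · intro i; exact (hcen _).2.2.1
  · intro i j hij
    have hij' : e i ≠ e j := fun hh => hij (e.injective hh)
    obtain ⟨h1, h2⟩ := hf2 _ _ hij'
    intro x hx hy
    rw [List.mem_append] at hx hy
    rcases hx with hx | hx <;> rcases hy with hy | hy
    · exact h2 hx hy
    · simp at hy; subst hy
      exact (hf1 (e i)).2.2.2.1 _ hx (hcenW _)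
    · simp at hx; subst hx
      exact (hf1 (e j)).2.2.2.1 _ hy (hcenW _)
    · simp at hx hy
      exact (hcend _ _ h1).1 (hx.symm.trans hy)
  · intro i j hij
    have hij' : e i ≠ e j := fun hh => hij (e.injective hh)
    exact (hcend _ _ (hf2 _ _ hij').1).2

/-- footprint of a unit -/
noncomputable def foot {k : ℕ} (core : V) (br : Fin k → List V) : Finset V :=
  insert core (univ.biUnion (fun i => (br i).toFinset))

lemma mem_foot {k : ℕ} {core : V} {br : Fin k → List V} {x : V} :
    x ∈ foot core br ↔ x = core ∨ ∃ i, x ∈ br i := by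
  simp [foot]

lemma foot_card {G : SimpleGraph V} {Y : Set V} {d L r : ℝ} (h : Ctx G Y d L r) {T t m p s : ℕ}
    (hp : Par d L r T t m p s) {Z0 core br st} (hu : UnitP G Y T (3 * t) m Z0 core br st) :
    ((foot core br).card : ℝ) ≤ 130 * r ^ 2 * L ^ 2 := by
  obtain ⟨hLpos, hr20, hr2000, hd1, h4L⟩ := h.num
  have hL := h.hL
  have hrpos : 0 < r := by linarith
  have h1 : ((foot core br).card : ℝ) ≤ (univ.biUnion (fun i => (br i).toFinset)).card + 1 := by
    exact_mod_cast card_insert_le _ _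
  have hb := card_biUnion_le' univ (fun i => (br i).toFinset) (2 * T + 2) (3 * t) (by simp) (by positivity) (by
    intro j hj
    have h1 := List.toFinset_card_le (br j)
    rw [hu.len] at h1
    exact_mod_cast h1)
  have hT9 := hp.T9
  have ht1 := hp.t1
  have hL2 : 1000 ≤ L ^ 2 := by nlinarith
  have h2 : (3 * (t:ℝ)) * (2 * T + 2) ≤ (3 * (2 * r ^ 2)) * (20 * L ^ 2) := by
    gcongr
    linarith
  have h3 : (1:ℝ) ≤ r ^ 2 * L ^ 2 := one_le_mul_of_one_le_of_one_le (one_le_pow₀ (by linarith)) (by linarith)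
  linarith

lemma units {G : SimpleGraph V} {Y : Set V} {d L r : ℝ} (h : Ctx G Y d L r) {T t m p s : ℕ}
    (hp : Par d L r T t m p s) :
    ∃ (core : Fin t → V) (br : Fin t → Fin (3 * t) → List V) (st : Fin t → Fin (3 * t) → Finset V),
      (∀ i, UnitP G Y T (3 * t) m ∅ (core i) (br i) (st i)) ∧
      ∀ i j, i ≠ j → Disjoint (foot (core i) (br i)) (foot (core j) (br j)) := by
  obtain ⟨c0, b0, s0, _⟩ := unit_exists h hp ∅ (by
    have := h.hd
    simp; rw [this]; have := h.hL; positivity)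
  obtain ⟨hLpos, hr20, hr2000, hd1, h4L⟩ := h.num
  have hL := h.hL
  have hrpos : 0 < r := by linarith
  have : Nonempty (V × (Fin (3 * t) → List V) × (Fin (3 * t) → Finset V)) := ⟨(c0, b0, s0)⟩
  obtain ⟨f, hf1, hf2⟩ := greedy (ι := Fin t) (α := V × (Fin (3 * t) → List V) × (Fin (3 * t) → Finset V))
    (fun _ a => UnitP G Y T (3 * t) m ∅ a.1 a.2.1 a.2.2)
    (fun _ _ a b => Disjoint (foot a.1 a.2.1) (foot b.1 b.2.1)) (fun _ _ _ _ hab => hab.symm) (by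
      intro S f hf _ i hi
      set Z0 := S.biUnion (fun j => foot (f j).1 (f j).2.1) with hZ0
      have hb := card_biUnion_le' S (fun j => foot (f j).1 (f j).2.1) (130 * r ^ 2 * L ^ 2) (2 * r ^ 2) (by
        refine le_trans ?_ hp.t1
        have := card_le_univ S
        simp at this
        exact_mod_cast this) (by positivity) (fun j hj => foot_card h hp (hf j hj))
      obtain ⟨c, b, st, hu⟩ := unit_exists h hp Z0 (by
        refine hb.trans ?_
        rw [h.hd]
        have : 0 ≤ r ^ 4 * L ^ 2 := by positivity
        linarith)
      refine ⟨(c, b, st), ⟨by simp, hu.chain, hu.nodup, hu.len, by simp, hu.st_Y, hu.st_adj, hu.st_card, hu.br_disj,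
        hu.st_disj⟩, ?_⟩
      intro j hj
      rw [disjoint_left]
      intro x hx hxj
      have hxZ : x ∈ Z0 := by
        rw [hZ0, mem_biUnion]; exact ⟨j, hj, hxj⟩
      rcases mem_foot.mp hx with rfl | ⟨i, hi⟩
      · exact hu.core_Z hxZ
      · exact hu.br_Z i x hi hxZ)
  exact ⟨fun i => (f i).1, fun i => (f i).2.1, fun i => (f i).2.2, hf1, hf2⟩

lemma final_paths {G : SimpleGraph V} {Y : Set V} {d L r : ℝ} (h : Ctx G Y d L r) {T t m p s : ℕ}
    (hp : Par d L r T t m p s) {core : Fin t → V} {br : Fin t → Fin (3 * t) → List V}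
    {st : Fin t → Fin (3 * t) → Finset V}
    (hu : ∀ i, UnitP G Y T (3 * t) m ∅ (core i) (br i) (st i)) :
    ∃ f : Fin t × Fin t → Fin (3 * t) × Fin (3 * t) × List V,
      (∀ x, CPath G (st x.1 (f x).1) (st x.2 (f x).2.1) (univ.biUnion (fun i => foot (core i) (br i))) (2 * T + 1)
        (f x).2.2) ∧
      ∀ x y, x ≠ y → List.Disjoint (f x).2.2 (f y).2.2 ∧ (x.1 = y.1 → (f x).1 ≠ (f y).1) ∧
        (x.1 = y.2 → (f x).1 ≠ (f y).2.1) ∧ (x.2 = y.1 → (f x).2.1 ≠ (f y).1) ∧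
        (x.2 = y.2 → (f x).2.1 ≠ (f y).2.1) := by
  obtain ⟨hLpos, hr20, hr2000, hd1, h4L⟩ := h.num
  have hL := h.hL
  have hrpos : 0 < r := by linarith
  have htpos : 0 < t := by
    have : (0:ℝ) < t := lt_of_lt_of_le (by positivity) hp.t0
    exact_mod_cast this
  obtain ⟨n1, n2, n3, n4, n5, n6⟩ := hp.num h.hd hL h.hr h.hn (z := 0) (by
    have := h.hd
    rw [this]; positivity)
  have : Nonempty (Fin (3 * t)) := ⟨⟨0, by omega⟩⟩
  set F := univ.biUnion (fun i => foot (core i) (br i)) with hF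
  have hFc : (F.card : ℝ) ≤ (2 * r ^ 2) * (130 * r ^ 2 * L ^ 2) :=
    card_biUnion_le' univ _ _ _ (by simpa using hp.t1) (by positivity) (fun i _ => foot_card h hp (hu i))
  apply greedy (ι := Fin t × Fin t) (α := Fin (3 * t) × Fin (3 * t) × List V)
    (fun x a => CPath G (st x.1 a.1) (st x.2 a.2.1) F (2 * T + 1) a.2.2)
    (fun x y a b => List.Disjoint a.2.2 b.2.2 ∧ (x.1 = y.1 → a.1 ≠ b.1) ∧
        (x.1 = y.2 → a.1 ≠ b.2.1) ∧ (x.2 = y.1 → a.2.1 ≠ b.1) ∧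
        (x.2 = y.2 → a.2.1 ≠ b.2.1))
  · rintro x y a b ⟨h1, h2, h3, h4, h5⟩
    exact ⟨h1.symm, fun hh => (h2 hh.symm).symm, fun hh => (h4 hh.symm).symm, fun hh => (h3 hh.symm).symm,
      fun hh => (h5 hh.symm).symm⟩
  intro S f hf _ x hx
  set W := F ∪ S.biUnion (fun j => (f j).2.2.toFinset) with hWd
  -- unused tags
  let un : Fin t → Finset (Fin (3 * t)) := fun i =>
    (univ.image (fun j => (f (i, j)).1) ∪ univ.image (fun j => (f (j, i)).2.1))ᶜ
  have hun : ∀ i, t ≤ (un i).card := by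
    intro i
    simp only [un]
    rw [card_compl]
    have h1 := card_image_le (s := (univ : Finset (Fin t))) (f := fun j => (f (i, j)).1)
    have h2 := card_image_le (s := (univ : Finset (Fin t))) (f := fun j => (f (j, i)).2.1)
    have h3 := card_union_le (univ.image (fun j => (f (i, j)).1)) (univ.image (fun j => (f (j, i)).2.1))
    simp at h1 h2 ⊢
    omega
  have hun1 : ∀ i, ∀ a ∈ un i, ∀ j, a ≠ (f (i, j)).1 := by
    intro i a ha j hj
    simp only [un, mem_compl, mem_union, mem_image, not_or, not_exists, not_and] at ha
    exact ha.1 j (mem_univ _) hj.symm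
  have hun2 : ∀ i, ∀ a ∈ un i, ∀ j, a ≠ (f (j, i)).2.1 := by
    intro i a ha j hj
    simp only [un, mem_compl, mem_union, mem_image, not_or, not_exists, not_and] at ha
    exact ha.2 j (mem_univ _) hj.symm
  have hYs : ∀ i, ∀ u ∈ (un i).biUnion (st i), u ∈ Y := by
    intro i u hh; rw [mem_biUnion] at hh; obtain ⟨a, _, ha⟩ := hh; exact (hu i).st_Y a u ha
  have hcs : ∀ i, d * L ^ 6 ≤ (((un i).biUnion (st i)).card : ℝ) := by
    intro i
    rw [biUnion_card_eq _ _ (hu i).st_card (hu i).st_disj]; push_cast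
    refine n5.trans ?_
    have := hun i
    gcongr
  obtain ⟨q, hq1, hq2, hq3, hq4, ⟨u, huu, hqu⟩, v, hv, hqv⟩ := connect h (W := W) (hYs x.1) (hYs x.2) (hcs x.1) (hcs x.2) (by
      have hb := card_biUnion_le' S (fun j => (f j).2.2.toFinset) (2 * T + 1) (2 * r ^ 2 * (2 * r ^ 2)) (by
        have h1 := card_le_univ S
        simp at h1
        have h2 : (S.card : ℝ) ≤ t * t := by exact_mod_cast h1
        refine h2.trans ?_
        have := hp.t1
        gcongr) (by positivity) (by
        intro j hj
        have h1 := List.toFinset_card_le (f j).2.2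
        rw [(hf j hj).1] at h1
        exact_mod_cast h1)
      have hZc : (W.card : ℝ) ≤ F.card + (S.biUnion (fun j => (f j).2.2.toFinset)).card := by
        exact_mod_cast card_union_le _ _
      have hL2 : 1000000 ≤ L ^ 2 := by nlinarith
      have hT1 : 2 * (T:ℝ) + 1 ≤ 19 * L ^ 2 := by have := hp.T9; linarith
      have h3 : 2 * r ^ 2 * (2 * r ^ 2) * (2 * (T:ℝ) + 1) ≤ 2 * r ^ 2 * (2 * r ^ 2) * (19 * L ^ 2) := by gcongr
      have h4 : 1000000 * (r ^ 4 * L ^ 2) ≤ L ^ 2 * (r ^ 4 * L ^ 2) := by gcongr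
      have h5 : 0 ≤ r ^ 4 * L ^ 2 := by positivity
      rw [h.hd]
      linarith) hp.T8 hp.T9
  rw [mem_biUnion] at huu hv
  obtain ⟨a, haun, ha⟩ := huu
  obtain ⟨b, hbun, hvb⟩ := hv
  refine ⟨(a, b, q), ⟨hq1, hq2, hq3, ?_, ⟨u, ha, hqu⟩, v, hvb, hqv⟩, ?_⟩
  · intro z hz hxW
    exact hq4 z hz (mem_union_left _ hxW)
  · intro j hj
    refine ⟨?_, ?_, ?_, ?_, ?_⟩
    · intro z hz hxj
      apply hq4 z hz
      apply mem_union_right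
      rw [mem_biUnion]
      exact ⟨j, hj, by simpa using hxj⟩
    · intro hh
      have := hun1 _ _ haun j.2
      rw [hh] at this; exact this
    · intro hh
      have := hun2 _ _ haun j.1
      rw [hh] at this; exact this
    · intro hh
      have := hun1 _ _ hbun j.2
      rw [hh] at this; exact this
    · intro hh
      have := hun2 _ _ hbun j.1
      rw [hh] at this; exact this

end TKproof
namespace TKproof

open Classical Finset

set_option linter.unusedSectionVars false

variable {V : Type} [Fintype V]

lemma walk_of_list {G : SimpleGraph V} : ∀ (l : List V) (u v : V), (u :: l).IsChain G.Adj →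
    (u :: l).getLast? = some v → ∃ w : G.Walk u v, w.support = u :: l
  | [], u, v, _, h => by
    simp at h
    subst h
    exact ⟨SimpleGraph.Walk.nil, rfl⟩
  | a :: l, u, v, hc, h => by
    rw [List.isChain_cons_cons] at hc
    rw [List.getLast?_cons_cons] at h
    obtain ⟨w, hw⟩ := walk_of_list l a v hc.2 h
    exact ⟨SimpleGraph.Walk.cons hc.1 w, by simp [hw]⟩

lemma last_of {G : SimpleGraph V} {Y : Set V} {T k m : ℕ} {Z0 core br st} (hu : UnitP G Y T k m Z0 core br st) (a : Fin k)
    {c x : V} (hc : (core :: br a).getLast? = some c) (hx : x ∈ st a) : G.Adj c x := by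
  apply hu.st_adj a x hx
  have hl := hu.len a
  cases hb : br a with
  | nil => rw [hb] at hl; simp at hl
  | cons z l => rw [hb, List.getLast?_cons_cons] at hc; exact hc

lemma one_path {G : SimpleGraph V} {Y : Set V} {T k m : ℕ} {Z1 Z2 F ci bi si cj bj sj}
    (hi : UnitP G Y T k m Z1 ci bi si) (hj : UnitP G Y T k m Z2 cj bj sj)
    (hd : Disjoint (foot ci bi) (foot cj bj)) (hFi : foot ci bi ⊆ F) (hFj : foot cj bj ⊆ F) {a b : Fin k} {q : List V}
    (hq : CPath G (si a) (sj b) F (2 * T + 1) q) :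
    ∃ w : G.Walk ci cj, w.IsPath ∧ w.length = 6 * T + 5 + 1 ∧
      ∀ x, x ∈ w.support → x = ci ∨ x = cj ∨ x ∈ bi a ∨ x ∈ bj b ∨ x ∈ q := by
  obtain ⟨q1, q2, q3, q4, ⟨u, hu, q5⟩, v, hv, q6⟩ := hq
  rw [disjoint_left] at hd
  have hmi : ∀ x ∈ ci :: bi a, x ∈ foot ci bi := by
    intro x hx; rw [mem_foot]
    rcases List.mem_cons.mp hx with hx | hx
    · exact Or.inl hx
    · exact Or.inr ⟨a, hx⟩
  have hmj : ∀ x ∈ cj :: bj b, x ∈ foot cj bj := by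
    intro x hx; rw [mem_foot]
    rcases List.mem_cons.mp hx with hx | hx
    · exact Or.inl hx
    · exact Or.inr ⟨b, hx⟩
  obtain ⟨w, hw⟩ := walk_of_list (G := G) (bi a ++ (q ++ (cj :: bj b).reverse)) ci cj (by
    rw [← List.cons_append, List.isChain_append, List.isChain_append]
    refine ⟨hi.chain a, ⟨q2, ?_, ?_⟩, ?_⟩
    · rw [List.isChain_reverse]
      exact (hj.chain b).imp (fun _ _ h => h.symm)
    · intro x hx y hy
      rw [q6] at hx
      rw [List.head?_reverse] at hy
      simp at hx
      subst hx
      exact (last_of hj b hy hv).symm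
    · intro x hx y hy
      rw [List.head?_append, q5] at hy
      simp at hy
      subst hy
      exact last_of hi a hx hu) (by
    rw [← List.cons_append, List.getLast?_append, List.getLast?_append, List.getLast?_reverse]
    simp)
  refine ⟨w, ?_, ?_, ?_⟩
  · rw [SimpleGraph.Walk.isPath_def, hw, ← List.cons_append, List.nodup_append, List.nodup_append]
    refine ⟨hi.nodup a, ⟨q3, List.nodup_reverse.mpr (hj.nodup b), ?_⟩, ?_⟩
    · intro x hx y hy hxy
      subst hxy
      rw [List.mem_reverse] at hy
      exact q4 x hx (hFj (hmj x hy))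
    · intro x hx y hy hxy
      subst hxy
      rw [List.mem_append, List.mem_reverse] at hy
      rcases hy with hy | hy
      · exact q4 x hy (hFi (hmi x hx))
      · exact hd (hmi x hx) (hmj x hy)
  · have h1 := w.length_support
    rw [hw] at h1
    simp [hi.len, hj.len, q1] at h1
    omega
  · intro x hx
    rw [hw] at hx
    simp at hx
    tauto

lemma main_ctx {G : SimpleGraph V} {Y : Set V} {d L r : ℝ} (h : Ctx G Y d L r) {T t m p s : ℕ}
    (hp : Par d L r T t m p s) : ∃ l, HasTK G t l := by
  obtain ⟨core, br, st, hu, hdj⟩ := units h hp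
  obtain ⟨f, hf1, hf2⟩ := final_paths h hp hu
  set F := univ.biUnion (fun i => foot (core i) (br i)) with hF
  have hsub : ∀ i, foot (core i) (br i) ⊆ F := fun i =>
    subset_biUnion_of_mem (fun i => foot (core i) (br i)) (mem_univ i)
  have hex : ∀ i j : Fin t, i < j → ∃ w : G.Walk (core i) (core j), w.IsPath ∧ w.length = 6 * T + 5 + 1 ∧
      ∀ x, x ∈ w.support → x = core i ∨ x = core j ∨ x ∈ br i (f (i, j)).1 ∨ x ∈ br j (f (i, j)).2.1 ∨
        x ∈ (f (i, j)).2.2 := fun i j hij =>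
    one_path (hu i) (hu j) (hdj i j hij.ne) (hsub i) (hsub j) (hf1 (i, j))
  choose P hP1 hP2 hP3 using hex
  have hcf : ∀ i, core i ∈ foot (core i) (br i) := fun i => mem_foot.mpr (Or.inl rfl)
  have hbf : ∀ i a x, x ∈ br i a → x ∈ foot (core i) (br i) := fun i a x hx => mem_foot.mpr (Or.inr ⟨a, hx⟩)
  have heq : ∀ i j x, x ∈ foot (core i) (br i) → x ∈ foot (core j) (br j) → i = j := by
    intro i j x hx hy
    by_contra hij
    exact (disjoint_left.mp (hdj i j hij)) hx hy
  have hqf : ∀ y i x, x ∈ (f y).2.2 → x ∈ foot (core i) (br i) → False := by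
    intro y i x hx hy
    exact (hf1 y).2.2.2.1 x hx (hsub i hy)
  have hcb : ∀ i j a, core i ∈ br j a → False := by
    intro i j a hx
    have := heq i j _ (hcf i) (hbf j a _ hx)
    subst this
    exact (List.nodup_cons.mp ((hu i).nodup a)).1 hx
  refine ⟨6 * T + 5, _, core, ?_, P, hP1, hP2, ?_, rfl⟩
  · intro i j hij
    exact heq i j (core i) (hcf i) (by rw [hij]; exact hcf j)
  · intro i j hij i' j' hij' hne v hv hv'
    obtain ⟨g1, g2, g3, g4, g5⟩ := hf2 (i, j) (i', j') hne
    simp only at g2 g3 g4 g5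
    have hbb : ∀ {i0 j0 a b}, v ∈ br i0 a → v ∈ br j0 b → (i0 = j0 → a ≠ b) → False := by
      intro i0 j0 a b hx hy hab
      have := heq i0 j0 _ (hbf _ _ _ hx) (hbf _ _ _ hy)
      subst this
      exact (hu i0).br_disj a b (hab rfl) hx hy
    have k1 := hP3 i j hij v hv
    have k2 := hP3 i' j' hij' v hv'
    have c1 : ∀ {i0 j0 a}, v = core i0 → v ∈ br j0 a → False := by
      intro i0 j0 a h1 h2; rw [h1] at h2; exact hcb _ _ _ h2
    have c2 : ∀ {i0 y}, v = core i0 → v ∈ (f y).2.2 → False := by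
      intro i0 y h1 h2; exact hqf y i0 v h2 (by rw [h1]; exact hcf i0)
    have c3 : ∀ {i0 a y}, v ∈ br i0 a → v ∈ (f y).2.2 → False := by
      intro i0 a y h1 h2; exact hqf y i0 v h2 (hbf _ _ _ h1)
    have k1' : v = core i ∨ v = core j := by
      rcases k1 with k1 | k1 | k1 | k1 | k1
      · exact Or.inl k1
      · exact Or.inr k1
      all_goals exfalso; rcases k2 with k2 | k2 | k2 | k2 | k2
      · exact c1 k2 k1
      · exact c1 k2 k1
      · exact hbb k1 k2 g2
      · exact hbb k1 k2 g3
      · exact c3 k1 k2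
      · exact c1 k2 k1
      · exact c1 k2 k1
      · exact hbb k1 k2 g4
      · exact hbb k1 k2 g5
      · exact c3 k1 k2
      · exact c2 k2 k1
      · exact c2 k2 k1
      · exact c3 k2 k1
      · exact c3 k2 k1
      · exact g1 k1 k2
    refine ⟨k1', ?_⟩
    rcases k2 with k2 | k2 | k2 | k2 | k2
    · exact Or.inl k2
    · exact Or.inr k2
    all_goals exfalso; rcases k1' with k1 | k1
    · exact c1 k1 k2
    · exact c1 k1 k2
    · exact c1 k1 k2
    · exact c1 k1 k2
    · exact c2 k1 k2
    · exact c2 k1 k2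

end TKproof
namespace TKproof

open Classical Finset

set_option linter.unusedSectionVars false

variable {V : Type} [Fintype V]

lemma avgDeg_ge {G : SimpleGraph V} {d : ℝ} (hG : minDegGe G d) (hn : 0 < Fintype.card V) : d ≤ avgDeg G := by
  unfold avgDeg
  rw [finsum_eq_sum_of_fintype, Nat.card_eq_fintype_card]
  have hn' : (0:ℝ) < Fintype.card V := by exact_mod_cast hn
  rw [le_div_iff₀ hn']
  calc d * Fintype.card V = ∑ v : V, d := by simp [mul_comm]
    _ ≤ _ := Finset.sum_le_sum fun v _ => hG v

/-- graph of edges between two sets -/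
def betw (G : SimpleGraph V) (X Y : Finset V) : SimpleGraph V where
  Adj v w := G.Adj v w ∧ ((v ∈ X ∧ w ∈ Y) ∨ (w ∈ X ∧ v ∈ Y))
  symm := ⟨fun v w h => ⟨h.1.symm, h.2.symm⟩⟩
  loopless := ⟨fun v h => G.loopless.irrefl v h.1⟩

lemma betw_card (G : SimpleGraph V) (X Y : Finset V) : (betw G X Y).edgeSet.ncard ≤ ec G X Y := by
  have h1 : (betw G X Y).edgeSet ⊆
      ((((X.sigma (fun x => Y.filter (fun y => G.Adj x y))).image (fun z => s(z.1, z.2))) : Finset (Sym2 V)) : Set (Sym2 V)) := by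
    intro e he
    induction e using Sym2.ind with
    | _ v w =>
      rw [SimpleGraph.mem_edgeSet] at he
      obtain ⟨h1, h2 | h2⟩ := he
      · simp only [coe_image, Set.mem_image, mem_coe, mem_sigma, mem_filter]
        exact ⟨⟨v, w⟩, ⟨h2.1, h2.2, h1⟩, rfl⟩
      · simp only [coe_image, Set.mem_image, mem_coe, mem_sigma, mem_filter]
        exact ⟨⟨w, v⟩, ⟨h2.1, h2.2, h1.symm⟩, Sym2.eq_swap⟩
  have h2 := Set.ncard_le_ncard h1 (Finset.finite_toSet _)
  rw [Set.ncard_coe_finset] at h2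
  refine h2.trans (card_image_le.trans ?_)
  rw [card_sigma]
  exact le_rfl

lemma expP_of {G : SimpleGraph V} {eps1 eps2 d L : ℝ} (h1 : 0 < eps1) (h2 : 0 < eps2) (h2' : eps2 < 1)
    (hd : 0 < d) (hE : IsExpander G eps1 (eps2 * d)) (hG : minDegGe G d)
    (hL : L = Real.log (15 * (Fintype.card V / d) / eps2) ^ 2 / eps1) :
    ExpP G d L := by
  intro X T hX1 hX2 hec
  have hed : 0 < eps2 * d := by positivity
  have hedd : eps2 * d ≤ d := by nlinarith
  have hXpos : (0:ℝ) < X.card := by linarith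
  have hn : (0:ℝ) < Fintype.card V := by linarith
  have hn' : 0 < Fintype.card V := by exact_mod_cast hn
  have hlow : 1 < 15 * (X.card : ℝ) / (eps2 * d) := by
    rw [lt_div_iff₀ hed]; linarith
  have hlog1 : 0 < Real.log (15 * (X.card : ℝ) / (eps2 * d)) := Real.log_pos hlow
  have hup : 15 * (X.card : ℝ) / (eps2 * d) ≤ 15 * (Fintype.card V / d) / eps2 := by
    have e : 15 * ((Fintype.card V : ℝ) / d) / eps2 = 15 * (Fintype.card V : ℝ) / (eps2 * d) := by field_simp
    rw [e]
    gcongr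
    exact card_le_univ X
  have hlog2 := Real.log_le_log (by linarith) hup
  set l1 := Real.log (15 * (X.card : ℝ) / (eps2 * d)) with hl1
  set l2 := Real.log (15 * (Fintype.card V / d) / eps2) with hl2
  have hl2p : 0 < l2 := by linarith
  have heps : epsFun eps1 (eps2 * d) X.card = eps1 / l1 ^ 2 := by
    unfold epsFun
    rw [if_neg]
    push Not
    linarith
  have hepsL : 1 / L ≤ eps1 / l1 ^ 2 := by
    rw [hL, one_div_div]
    gcongr
  have hLpos : 0 < L := by rw [hL]; positivity
  have hav := avgDeg_ge hG hn'
  have hav0 : 0 ≤ avgDeg G := by linarith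
  have key := hE (X : Set V) (by rw [Set.ncard_coe_finset]; linarith) (by
    rw [Set.ncard_coe_finset, Nat.card_eq_fintype_card]; exact hX2) (betw G X (X ∪ T)ᶜ) (fun v w h => h.1) (by
    rw [Set.ncard_coe_finset, heps]
    have h3 : ((betw G X (X ∪ T)ᶜ).edgeSet.ncard : ℝ) ≤ ec G X (X ∪ T)ᶜ := by exact_mod_cast betw_card _ _ _
    refine h3.trans (hec.trans ?_)
    calc d * X.card / L = d * (1 / L) * X.card := by ring
      _ ≤ _ := by gcongr)
  rw [Set.ncard_coe_finset, heps] at key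
  have hsub : extNbr (G \ betw G X (X ∪ T)ᶜ) (X : Set V) ⊆ (T : Set V) := by
    rintro w ⟨hw, v, hv, hvw⟩
    rw [SimpleGraph.sdiff_adj] at hvw
    by_contra hwT
    apply hvw.2
    refine ⟨hvw.1, Or.inl ⟨by simpa using hv, ?_⟩⟩
    simp at hw hwT ⊢
    exact ⟨hw, hwT⟩
  have hc := Set.ncard_le_ncard hsub (Finset.finite_toSet _)
  rw [Set.ncard_coe_finset] at hc
  have hc' : ((extNbr (G \ betw G X (X ∪ T)ᶜ) (X : Set V)).ncard : ℝ) ≤ T.card := by exact_mod_cast hc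
  calc (X.card : ℝ) / L = 1 / L * X.card := by ring
    _ ≤ eps1 / l1 ^ 2 * X.card := by gcongr
    _ ≤ _ := key.trans hc'

lemma bip_side {G : SimpleGraph V} (h : IsBipartite G) : ∃ Y : Set V,
    (∀ v w, G.Adj v w → (v ∈ Y ↔ w ∉ Y)) ∧ (Fintype.card V : ℝ) / 2 ≤ ((univ.filter (fun v => v ∉ Y)).card : ℝ) := by
  obtain ⟨A, hA⟩ := h
  have h3 : (univ.filter (fun v => v ∈ A)).card + (univ.filter (fun v => v ∉ A)).card = Fintype.card V := by
    rw [Finset.card_filter_add_card_filter_not, card_univ]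
  have h3' : ((univ.filter (fun v => v ∈ A)).card : ℝ) + (univ.filter (fun v => v ∉ A)).card = Fintype.card V := by
    exact_mod_cast h3
  by_cases hc : (Fintype.card V : ℝ) / 2 ≤ ((univ.filter (fun v => v ∉ A)).card : ℝ)
  · exact ⟨A, fun v w hvw => hA hvw, hc⟩
  · refine ⟨Aᶜ, fun v w hvw => ?_, ?_⟩
    · have := hA hvw
      simp only [Set.mem_compl_iff]; tauto
    · push Not at hc
      simp only [Set.mem_compl_iff, not_not]
      linarith

lemma par_exists {d L r : ℝ} (hd : d = r ^ 4) (hr0 : 0 < r) (hL : 1000 ≤ L) (hr : L ^ 20 ≤ r) :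
    ∃ T m p s, Par d L r T ⌈Real.sqrt d⌉₊ m p s := by
  have hLp : 0 < L := by linarith
  have hL1 : 1 ≤ L := by linarith
  have hr1 : 1 ≤ r := le_trans (one_le_pow₀ hL1) hr
  have hsq : Real.sqrt d = r ^ 2 := by
    rw [hd, show r ^ 4 = (r ^ 2) ^ 2 by ring]
    exact Real.sqrt_sq (by positivity)
  have hr21 : 1 ≤ r ^ 2 := one_le_pow₀ hr1
  have hL21 : 1 ≤ L ^ 2 := one_le_pow₀ hL1
  have hL61 : 1 ≤ L ^ 6 := one_le_pow₀ hL1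
  have hL71 : 1 ≤ L ^ 7 := one_le_pow₀ hL1
  have hrL : 1 ≤ r ^ 2 * L ^ 6 := one_le_mul_of_one_le_of_one_le hr21 hL61
  have h2 : 2 ≤ d / L := by
    rw [le_div_iff₀ hLp, hd]
    calc 2 * L = 2 * L ^ 1 := by ring
      _ ≤ L ^ 20 := powL hL _ _ (by norm_num) _ (by norm_num)
      _ ≤ r := hr
      _ = r ^ 1 := by ring
      _ ≤ r ^ 4 := by gcongr; norm_num
  refine ⟨⌈8 * L ^ 2⌉₊, ⌈r ^ 2 * L ^ 6⌉₊, ⌈2 * L ^ 7⌉₊, ⌊d / L⌋₊, ?_⟩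
  have c1 := Nat.ceil_lt_add_one (a := 8 * L ^ 2) (by positivity)
  have c2 := Nat.ceil_lt_add_one (a := r ^ 2 * L ^ 6) (by positivity)
  have c3 := Nat.ceil_lt_add_one (a := 2 * L ^ 7) (by positivity)
  have c4 := Nat.ceil_lt_add_one (a := r ^ 2) (by positivity)
  have c5 := Nat.lt_floor_add_one (d / L)
  rw [hsq]
  refine ⟨Nat.le_ceil _, by linarith, Nat.le_ceil _, by linarith, Nat.le_ceil _, by linarith, Nat.le_ceil _, by linarith, ?_,
    Nat.floor_le (by linarith)⟩
  have e : d / (2 * L) = d / L / 2 := by field_simp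
  rw [e]; linarith

lemma large_x (eps1 : ℝ) (h1 : 0 < eps1) : ∃ x0 : ℝ, ∀ x, x0 ≤ x → (4 / eps1) ^ 40 * Real.log x ^ 80 ≤ x := by
  have h := Real.isLittleO_pow_log_id_atTop (n := 80)
  have hc : 0 < ((4 / eps1) ^ 40)⁻¹ := by positivity
  have h2 := h.def hc
  rw [Filter.eventually_atTop] at h2
  obtain ⟨a, ha⟩ := h2
  refine ⟨max a 0, fun x hx => ?_⟩
  have h3 := ha x ((le_max_left _ _).trans hx)
  have hx0 : 0 ≤ x := (le_max_right _ _).trans hx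
  simp only [id, Real.norm_eq_abs] at h3
  rw [abs_of_nonneg hx0] at h3
  have h4 := (le_abs_self _).trans h3
  rw [inv_mul_eq_div, le_div_iff₀ (by positivity)] at h4
  linarith

lemma hasTK_small (G : SimpleGraph V) (t : ℕ) (ht : t ≤ 1) (hV : t = 1 → Nonempty V) : HasTK G t 0 := by
  have hlt : ∀ i j : Fin t, i < j → False := by
    intro i j hij
    have := i.2; have := j.2
    have : i.1 < j.1 := hij
    omega
  have hb : Nonempty (Fin t → V) := by
    by_cases h : t = 1
    · have := hV h
      infer_instance
    · have : t = 0 := by omega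
      subst this
      exact ⟨fun i => i.elim0⟩
  obtain ⟨b⟩ := hb
  refine ⟨_, b, ?_, fun i j h => (hlt i j h).elim, fun i j h => (hlt i j h).elim, fun i j h => (hlt i j h).elim,
    fun i j h => (hlt i j h).elim, rfl⟩
  intro i j _
  by_contra hij
  rcases lt_or_gt_of_ne hij with h | h
  · exact hlt _ _ h
  · exact hlt _ _ h

lemma ctx_exists {G : SimpleGraph V} {eps1 eps2 d x0 : ℝ} (h1 : 0 < eps1) (h1' : eps1 < 1) (h2 : 0 < eps2) (h2' : eps2 < 1)
    (hx0 : ∀ x, x0 ≤ x → (4 / eps1) ^ 40 * Real.log x ^ 80 ≤ x) (hd : 1 ≤ d)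
    (hB : IsBipartite G) (hE : IsExpander G eps1 (eps2 * d)) (hG : minDegGe G d)
    (k1 : x0 ≤ Fintype.card V / d) (k2 : Real.exp 32 ≤ Fintype.card V / d) (k3 : 15 / eps2 ≤ Fintype.card V / d)
    (k4 : Real.exp (4 / eps1) ≤ Fintype.card V / d) (hlog : Real.log (Fintype.card V) ^ 800 ≤ d) :
    ∃ Y L r, Ctx G Y d L r ∧ 0 < r := by
  obtain ⟨Y, hY1, hY2⟩ := bip_side hB
  have hdp : 0 < d := by linarith
  have hn0 : (0:ℝ) ≤ Fintype.card V := by positivity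
  have hxn : (Fintype.card V : ℝ) / d ≤ Fintype.card V := div_le_self hn0 hd
  have hE := expP_of h1 h2 h2' hdp hE hG rfl
  have hnx : (Fintype.card V : ℝ) = d * (Fintype.card V / d) := by field_simp
  set x := (Fintype.card V : ℝ) / d with hx
  have hxpos : 0 < x := (Real.exp_pos _).trans_le k2
  have lx1 : 32 ≤ Real.log x := (Real.le_log_iff_exp_le hxpos).mpr k2
  have lx2 : 4 / eps1 ≤ Real.log x := (Real.le_log_iff_exp_le hxpos).mpr k4
  have lxn : Real.log x ≤ Real.log (Fintype.card V) := Real.log_le_log hxpos hxn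
  have la1 : Real.log x ≤ Real.log (15 * x / eps2) := by
    apply Real.log_le_log hxpos
    rw [le_div_iff₀ h2]; nlinarith
  have la2 : Real.log (15 * x / eps2) ≤ 2 * Real.log x := by
    have e : 15 * x / eps2 = 15 / eps2 * x := by ring
    rw [e, Real.log_mul (by positivity) hxpos.ne']
    have := Real.log_le_log (by positivity) k3
    linarith
  set lam := Real.log (15 * x / eps2) with hlam
  set ell := Real.log (Fintype.card V) with hell
  have hell32 : 32 ≤ ell := lx1.trans lxn
  have hlamp : 32 ≤ lam := lx1.trans la1
  set L := lam ^ 2 / eps1 with hLd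
  have hL1000 : 1000 ≤ L := by
    rw [hLd, le_div_iff₀ h1]; nlinarith
  have hLlam : lam ≤ L := by
    rw [hLd, le_div_iff₀ h1]; nlinarith
  have hLu : L ≤ 4 / eps1 * Real.log x ^ 2 := by
    rw [hLd]
    calc lam ^ 2 / eps1 ≤ (2 * Real.log x) ^ 2 / eps1 := by gcongr
      _ = _ := by ring
  have hL3 : L ≤ ell ^ 3 := by
    calc L ≤ 4 / eps1 * Real.log x ^ 2 := hLu
      _ ≤ ell * ell ^ 2 := by gcongr; exact lx2.trans lxn
      _ = _ := by ring
  set r := Real.sqrt (Real.sqrt d) with hr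
  have hr0 : 0 < r := Real.sqrt_pos.mpr (Real.sqrt_pos.mpr hdp)
  have hr4 : d = r ^ 4 := by
    have e1 : r ^ 2 = Real.sqrt d := Real.sq_sqrt (Real.sqrt_nonneg _)
    have e2 : Real.sqrt d ^ 2 = d := Real.sq_sqrt hdp.le
    calc d = (r ^ 2) ^ 2 := by rw [e1, e2]
      _ = _ := by ring
  have hr200 : ell ^ 200 ≤ r := by
    have : (ell ^ 200) ^ 4 ≤ r ^ 4 := by
      rw [← hr4]
      calc (ell ^ 200) ^ 4 = ell ^ 800 := by rw [← pow_mul]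
        _ ≤ d := hlog
    exact (pow_le_pow_iff_left₀ (by positivity) hr0.le (by norm_num)).mp this
  have hell1 : 1 ≤ ell := by linarith
  refine ⟨Y, L, r, ⟨hY1, hE, hY2, hr4, hL1000, ?_, ?_, ?_, ?_⟩, hr0⟩
  · refine le_trans ?_ hr200
    calc L ^ 20 ≤ (ell ^ 3) ^ 20 := by gcongr
      _ = ell ^ 60 := by rw [← pow_mul]
      _ ≤ _ := pow_le_pow_right₀ hell1 (by norm_num)
  · refine le_trans ?_ hr200
    calc 4 * ell ≤ ell * ell := by gcongr; linarith
      _ = ell ^ 2 := by ring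
      _ ≤ _ := pow_le_pow_right₀ hell1 (by norm_num)
  · conv_rhs => rw [hnx]
    gcongr
    calc L ^ 40 ≤ (4 / eps1 * Real.log x ^ 2) ^ 40 := by gcongr
      _ = (4 / eps1) ^ 40 * Real.log x ^ 80 := by rw [mul_pow, ← pow_mul]
      _ ≤ x := hx0 x k1
  · conv_lhs => rw [hnx]
    gcongr
    rw [← Real.log_le_iff_le_exp hxpos]
    linarith

end TKproof

theorem statement_8 (eps1 eps2 : Real)
    (heps1 : 0 < eps1) (heps1' : eps1 < 1) (heps2 : 0 < eps2) (heps2' : eps2 < 1) :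
    ∃ K₀ : Real, ∀ K : Real, K₀ ≤ K →
      ∀ (V : Type) [Fintype V] (G : SimpleGraph V) (n : Nat) (d : Real),
        Nat.card V = n → IsBipartite G → IsExpander G eps1 (eps2 * d) → minDegGe G d →
        K * d ≤ (n : Real) → Real.log n ^ 800 ≤ d →
        ∃ l : Nat, HasTK G ⌈Real.sqrt d⌉₊ l := by
  obtain ⟨x0, hx0⟩ := TKproof.large_x eps1 heps1
  refine ⟨max (max x0 (Real.exp 32)) (max (15 / eps2) (Real.exp (4 / eps1))), ?_⟩
  intro K hK V _ G n d hn hB hE hG hKd hlog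
  rw [Nat.card_eq_fintype_card] at hn
  subst hn
  simp only [max_le_iff] at hK
  obtain ⟨⟨k1, k2⟩, k3, k4⟩ := hK
  have hK0 : 0 < K := (Real.exp_pos _).trans_le k2
  have hd0 : 0 ≤ d := le_trans (by positivity) hlog
  by_cases hd1 : d ≤ 1
  · refine ⟨0, TKproof.hasTK_small G _ ?_ ?_⟩
    · rw [Nat.ceil_le]
      simp
      exact hd1
    · intro h1
      rcases hd0.eq_or_lt with h0 | h0
      · rw [← h0] at h1; simp at h1
      · have : (0:ℝ) < Fintype.card V := lt_of_lt_of_le (by positivity) hKd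
        have : 0 < Fintype.card V := by exact_mod_cast this
        exact Fintype.card_pos_iff.mp this
  · push Not at hd1
    have hKx : K ≤ (Fintype.card V : ℝ) / d := by
      rw [le_div_iff₀ (by linarith)]; exact hKd
    obtain ⟨Y, L, r, hctx, hr⟩ := TKproof.ctx_exists heps1 heps1' heps2 heps2' hx0 hd1.le hB hE hG (k1.trans hKx)
      (k2.trans hKx) (k3.trans hKx) (k4.trans hKx) hlog
    obtain ⟨T, m, p, s, hp⟩ := TKproof.par_exists hctx.hd hr hctx.hL hctx.hr
    exact TKproof.main_ctx hctx hp
end
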